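/- Assume 0 < σ < ∞ if N ≤ 4 and 0 < σ < 4/(N-4) if N ≥ 5. Then for every c > 0 one has t(c) > 0 and the minimization problem (T_c) admits a solution. Moreover, for any sequence (u_n) ⊂ H²(ℝ^N) satisfying ∫|u_n|^{2σ+2}dx → 1 and T_c(u_n) → t(c), there exist a subsequence (u_{n_k}), a sequence (x_k) ⊂ ℝ^N, and a minimizer u for (T_c) such that u_{n_k}(·+x_k) → u strongly in H²(ℝ^N). -/

import Mathlib

open MeasureTheory Filter Topology

noncomputable section

abbrev Esp (N : ℕ) := EuclideanSpace ℝ (Fin N)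

/-- Smooth compactly supported test functions. -/
def TestFun {N : ℕ} (φ : Esp N → ℂ) : Prop :=
  ContDiff ℝ (⊤ : ℕ∞) φ ∧ HasCompactSupport φ

/-- Partial derivative in the `i`-th coordinate direction. -/
def pderivC {N : ℕ} (i : Fin N) (φ : Esp N → ℂ) : Esp N → ℂ :=
  fun x => fderiv ℝ φ x (EuclideanSpace.single i (1 : ℝ))

/-- The Laplacian of a (smooth) function. -/
def lapC {N : ℕ} (φ : Esp N → ℂ) : Esp N → ℂ :=
  fun x => ∑ i, pderivC i (pderivC i φ) x

/-- `v` is the weak `i`-th partial derivative of `u`. -/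
def IsWeakPDeriv {N : ℕ} (u : Esp N → ℂ) (i : Fin N) (v : Esp N → ℂ) : Prop :=
  ∀ φ : Esp N → ℂ, TestFun φ → ∫ x, u x * pderivC i φ x = - ∫ x, v x * φ x

/-- `v` is the weak Laplacian of `u`. -/
def IsWeakLap {N : ℕ} (u v : Esp N → ℂ) : Prop :=
  ∀ φ : Esp N → ℂ, TestFun φ → ∫ x, u x * lapC φ x = ∫ x, v x * φ x

/-- An element of the Sobolev space `H²(ℝ^N, ℂ)`: an `L²` function together with its
weak partial derivatives and its weak Laplacian, all in `L²`. -/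
structure H2 (N : ℕ) where
  u : Esp N → ℂ
  grad : Fin N → Esp N → ℂ
  lapl : Esp N → ℂ
  u_mem : MemLp u 2 (volume : Measure (Esp N))
  grad_mem : ∀ i, MemLp (grad i) 2 (volume : Measure (Esp N))
  lapl_mem : MemLp lapl 2 (volume : Measure (Esp N))
  grad_spec : ∀ i, IsWeakPDeriv u i (grad i)
  lapl_spec : IsWeakLap u lapl

namespace H2

variable {N : ℕ}

/-- `∫ |u|²`. -/
def massSq (U : H2 N) : ℝ := ∫ x, ‖U.u x‖ ^ 2

/-- `∫ |∇u|²`. -/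
def gradSq (U : H2 N) : ℝ := ∑ i, ∫ x, ‖U.grad i x‖ ^ 2

/-- `∫ |Δu|²`. -/
def lapSq (U : H2 N) : ℝ := ∫ x, ‖U.lapl x‖ ^ 2

/-- `∫ |u|^{2σ+2}`. -/
def pPow (σ : ℝ) (U : H2 N) : ℝ := ∫ x, ‖U.u x‖ ^ (2 * σ + 2)

/-- The energy `E(u) = ∫|Δu|² - 2∫|∇u|² - (1/(σ+1))∫|u|^{2σ+2}`. -/
def energy (σ : ℝ) (U : H2 N) : ℝ :=
  U.lapSq - 2 * U.gradSq - (1 / (σ + 1)) * U.pPow σ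

/-- The square of the `H²` norm. -/
def h2NormSq (U : H2 N) : ℝ := U.massSq + U.gradSq + U.lapSq

/-- `u` does not vanish almost everywhere. -/
def Nontriv (U : H2 N) : Prop := ¬ (U.u =ᵐ[(volume : Measure (Esp N))] 0)

end H2

/-- `E_min(m) = inf {E(u) : u ∈ H², ∫|u|² = m}`, with values in `EReal`. -/
def EminE (N : ℕ) (σ m : ℝ) : EReal :=
  ⨅ (U : H2 N) (_ : U.massSq = m), ((U.energy σ : ℝ) : EReal)

/-- The `L^p` norm (as a real number) of a function on `ℝ^N`. -/
def rLp {N : ℕ} (p : ℝ) (f : Esp N → ℂ) : ℝ :=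
  (eLpNorm f (ENNReal.ofReal p) (volume : Measure (Esp N))).toReal


/-- The best constant `B(N,σ)` in the Gagliardo–Nirenberg–Sobolev inequality
`‖u‖_{L^{2σ+2}}^{2σ+2} ≤ B ‖Δu‖_{L²}^{Nσ/2} ‖u‖_{L²}^{2+2σ-Nσ/2}`. -/
def GNconst (N : ℕ) (σ : ℝ) : ℝ :=
  sSup {r : ℝ | ∃ U : H2 N, U.Nontriv ∧
    r = U.pPow σ /
      (rLp 2 U.lapl ^ ((N : ℝ) * σ / 2) * rLp 2 U.u ^ (2 + 2 * σ - (N : ℝ) * σ / 2))}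

/-- `k* = (σ+1)^{1/σ} B(N,σ)^{-1/σ}`. -/
def kstar (N : ℕ) (σ : ℝ) : ℝ := (σ + 1) ^ (1 / σ) * GNconst N σ ^ (-(1 / σ))

/-- Strong `H²` convergence of `v k (· + xs k)` to `U`. -/
def H2TendstoTrans {N : ℕ} (v : ℕ → H2 N) (xs : ℕ → Esp N) (U : H2 N) : Prop :=
  Tendsto (fun k => eLpNorm (fun x => (v k).u (x + xs k) - U.u x) 2
      (volume : Measure (Esp N))) atTop (nhds 0) ∧
  (∀ i, Tendsto (fun k => eLpNorm (fun x => (v k).grad i (x + xs k) - U.grad i x) 2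
      (volume : Measure (Esp N))) atTop (nhds 0)) ∧
  Tendsto (fun k => eLpNorm (fun x => (v k).lapl (x + xs k) - U.lapl x) 2
      (volume : Measure (Esp N))) atTop (nhds 0)

/-- `u` is a weak (`H^{-2}`) solution of `Δ²u + 2Δu + (1+c)u - |u|^{2σ}u = 0`. -/
def SolvesSW {N : ℕ} (σ c : ℝ) (U : H2 N) : Prop :=
  ∀ φ : Esp N → ℂ, TestFun φ →
    (∫ x, U.lapl x * lapC φ x) + 2 * (∫ x, U.lapl x * φ x) +
        ((1 + c : ℝ) : ℂ) * (∫ x, U.u x * φ x) -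
        (∫ x, ((‖U.u x‖ ^ (2 * σ) : ℝ) : ℂ) * U.u x * φ x) = 0

/-- `T_c(u) = ∫|Δu|² - 2∫|∇u|² + (1+c)∫|u|²`. -/
def Tfun {N : ℕ} (c : ℝ) (U : H2 N) : ℝ := U.lapSq - 2 * U.gradSq + (1 + c) * U.massSq

/-- `t(c) = inf {T_c(u) : ∫|u|^{2σ+2} = 1}`. -/
def tmin (N : ℕ) (σ c : ℝ) : ℝ := sInf {r : ℝ | ∃ U : H2 N, U.pPow σ = 1 ∧ r = Tfun c U}

/-- The action `S_c(u) = E(u) + (1+c)‖u‖_{L²}² = T_c(u) - (1/(σ+1))∫|u|^{2σ+2}`. -/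
def action {N : ℕ} (σ c : ℝ) (U : H2 N) : ℝ := U.energy σ + (1 + c) * U.massSq


section helpers
open scoped SchwartzMap ENNReal FourierTransform

section cutoff
variable {N : ℕ}

lemma aux_pderiv_mul (i : Fin N) {f g : Esp N → ℂ} (hf : Differentiable ℝ f)
    (hg : Differentiable ℝ g) :
    pderivC i (fun x => f x * g x) = fun x => f x * pderivC i g x + pderivC i f x * g x := by
  funext x
  unfold pderivC
  rw [fderiv_fun_mul (hf x) (hg x)]
  simp [mul_comm]

lemma aux_pderiv_add (i : Fin N) {f g : Esp N → ℂ} (hf : Differentiable ℝ f)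
    (hg : Differentiable ℝ g) :
    pderivC i (fun x => f x + g x) = fun x => pderivC i f x + pderivC i g x := by
  funext x
  unfold pderivC
  rw [fderiv_fun_add (hf x) (hg x)]
  simp

lemma aux_pderiv_scale (i : Fin N) (f : Esp N → ℂ) (t : ℝ) :
    pderivC i (fun x => f (t • x)) = fun x => (t : ℂ) * pderivC i f (t • x) := by
  funext x
  unfold pderivC
  rw [fderiv_comp_smul]
  simp

lemma aux_pderiv_cmul (i : Fin N) {f : Esp N → ℂ} (hf : Differentiable ℝ f) (a : ℂ) :
    pderivC i (fun x => a * f x) = fun x => a * pderivC i f x := by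
  funext x
  unfold pderivC
  rw [fderiv_const_mul (hf x)]
  simp

lemma aux_pderiv_smooth (i : Fin N) {f : Esp N → ℂ} (hf : ContDiff ℝ (⊤ : ℕ∞) f) :
    ContDiff ℝ (⊤ : ℕ∞) (pderivC i f) := by
  unfold pderivC
  exact (hf.fderiv_right (by simp)).clm_apply contDiff_const

lemma aux_smooth_diff {f : Esp N → ℂ} (hf : ContDiff ℝ (⊤ : ℕ∞) f) : Differentiable ℝ f :=
  hf.differentiable (by simp)

lemma aux_pderiv_cpt (i : Fin N) {f : Esp N → ℂ} (hf : HasCompactSupport f) :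
    HasCompactSupport (pderivC i f) := by
  unfold pderivC
  exact hf.fderiv_apply (𝕜 := ℝ) _

lemma aux_pderiv_congr (i : Fin N) {f g : Esp N → ℂ} {x : Esp N} (h : f =ᶠ[𝓝 x] g) :
    pderivC i f =ᶠ[𝓝 x] pderivC i g := by
  filter_upwards [h.fderiv (𝕜 := ℝ)] with y hy
  unfold pderivC
  rw [hy]

/-- basic bump -/
def auxBump (N : ℕ) : Esp N → ℂ := fun x =>
  (((⟨1, 2, by norm_num, by norm_num⟩ : ContDiffBump (0 : Esp N)) x : ℝ) : ℂ)

lemma auxBump_smooth : ContDiff ℝ (⊤ : ℕ∞) (auxBump N) := by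
  unfold auxBump
  exact Complex.ofRealCLM.contDiff.comp (ContDiffBump.contDiff _)

lemma auxBump_cpt : HasCompactSupport (auxBump N) := by
  unfold auxBump
  exact (ContDiffBump.hasCompactSupport _).comp_left (g := Complex.ofReal) (by simp)

lemma auxBump_one {x : Esp N} (hx : ‖x‖ ≤ 1) : auxBump N x = 1 := by
  unfold auxBump
  rw [ContDiffBump.one_of_mem_closedBall]
  · simp
  · simpa using hx

lemma aux_bdd {f : Esp N → ℂ} (hf : ContDiff ℝ (⊤ : ℕ∞) f) (hc : HasCompactSupport f) :
    ∃ C : ℝ, 0 ≤ C ∧ ∀ x, ‖f x‖ ≤ C := by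
  obtain ⟨C, hC⟩ := hc.exists_bound_of_continuous hf.continuous
  exact ⟨C, (norm_nonneg _).trans (hC 0), hC⟩

def auxCut (N : ℕ) (n : ℕ) : Esp N → ℂ := fun x => auxBump N (((n : ℝ) + 1)⁻¹ • x)

lemma auxCut_smooth (n : ℕ) : ContDiff ℝ (⊤ : ℕ∞) (auxCut N n) :=
  auxBump_smooth.comp (contDiff_const_smul _)

lemma auxCut_cpt (n : ℕ) : HasCompactSupport (auxCut N n) :=
  auxBump_cpt.comp_smul (by positivity)

lemma auxCut_ev (x : Esp N) : ∀ᶠ n : ℕ in atTop, auxCut N n =ᶠ[𝓝 x] fun _ => 1 := by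
  obtain ⟨m, hm⟩ := exists_nat_gt (‖x‖ + 1)
  filter_upwards [eventually_ge_atTop m] with n hn
  filter_upwards [Metric.ball_mem_nhds x one_pos] with y hy
  unfold auxCut
  apply auxBump_one
  have h1 : ‖y‖ ≤ ‖x‖ + 1 := by
    have := norm_sub_norm_le y x
    rw [Metric.mem_ball, dist_eq_norm] at hy
    linarith
  have h2 : (m : ℝ) ≤ n := by exact_mod_cast hn
  rw [norm_smul, norm_inv, Real.norm_of_nonneg (by positivity), inv_mul_le_iff₀ (by positivity)]
  linarith

lemma auxCut_bd : ∃ C : ℝ, 0 ≤ C ∧ ∀ (n : ℕ) (x : Esp N), ‖auxCut N n x‖ ≤ C ∧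
    (∀ i, ‖pderivC i (auxCut N n) x‖ ≤ C) ∧ ∀ i, ‖pderivC i (pderivC i (auxCut N n)) x‖ ≤ C := by
  obtain ⟨C0, h0, hC0⟩ := aux_bdd (auxBump_smooth (N := N)) auxBump_cpt
  choose C1 h1 hC1 using fun i : Fin N =>
    aux_bdd (aux_pderiv_smooth i auxBump_smooth) (aux_pderiv_cpt i auxBump_cpt)
  choose C2 h2 hC2 using fun i : Fin N =>
    aux_bdd (aux_pderiv_smooth i (aux_pderiv_smooth i auxBump_smooth))
      (aux_pderiv_cpt i (aux_pderiv_cpt i auxBump_cpt))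
  have hs1 : ∀ i, C1 i ≤ ∑ j, C1 j := fun i =>
    Finset.single_le_sum (fun j _ => h1 j) (Finset.mem_univ i)
  have hs2 : ∀ i, C2 i ≤ ∑ j, C2 j := fun i =>
    Finset.single_le_sum (fun j _ => h2 j) (Finset.mem_univ i)
  have p1 : 0 ≤ ∑ j, C1 j := Finset.sum_nonneg fun j _ => h1 j
  have p2 : 0 ≤ ∑ j, C2 j := Finset.sum_nonneg fun j _ => h2 j
  refine ⟨C0 + ∑ j, C1 j + ∑ j, C2 j, by positivity, fun n x => ⟨?_, fun i => ?_, fun i => ?_⟩⟩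
  · unfold auxCut
    linarith [hC0 (((n : ℝ) + 1)⁻¹ • x)]
  all_goals
    have ht : ((n : ℝ) + 1)⁻¹ ≤ 1 := inv_le_one_of_one_le₀ (by linarith [(Nat.cast_nonneg n : (0:ℝ) ≤ n)])
    have ht0 : 0 ≤ ((n : ℝ) + 1)⁻¹ := by positivity
    unfold auxCut
    rw [aux_pderiv_scale]
  · rw [norm_mul, Complex.norm_real, Real.norm_of_nonneg ht0]
    have := mul_le_mul ht (hC1 i (((n : ℝ) + 1)⁻¹ • x)) (norm_nonneg _) zero_le_one
    linarith [hs1 i]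
  · rw [aux_pderiv_cmul i, aux_pderiv_scale]
    · simp only [norm_mul, Complex.norm_real]
      rw [Real.norm_of_nonneg ht0]
      have a := mul_le_mul ht (hC2 i (((n : ℝ) + 1)⁻¹ • x)) (norm_nonneg _) zero_le_one
      have b := mul_le_mul ht a (by positivity) zero_le_one
      linarith [hs2 i]
    · exact aux_smooth_diff ((aux_pderiv_smooth i auxBump_smooth).comp (contDiff_const_smul _))

lemma aux_pderiv_schwartz (i : Fin N) (φ : 𝓢(Esp N, ℂ)) :
    pderivC i φ = (LineDeriv.lineDerivOp (EuclideanSpace.single i (1:ℝ)) φ : 𝓢(Esp N, ℂ)) := by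
  funext x
  unfold pderivC
  rw [SchwartzMap.lineDerivOp_apply, (φ.differentiableAt).lineDeriv_eq_fderiv]

lemma aux_int_mul {u : Esp N → ℂ} (hu : MemLp u 2 volume) (φ : 𝓢(Esp N, ℂ)) :
    Integrable (fun x => u x * φ x) := hu.integrable_mul (φ.memLp 2 volume)

lemma aux_tendsto_cut {u : Esp N → ℂ} (hu : MemLp u 2 volume) (F : ℕ → Esp N → ℂ)
    (hF : ∀ n, Continuous (F n)) (G : Esp N → ℂ)
    (hlim : ∀ x, ∀ᶠ n in atTop, F n x = G x) (B : Esp N → ℝ) (hB : MemLp B 2 volume)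
    (hFB : ∀ n x, ‖F n x‖ ≤ B x) :
    Tendsto (fun n => ∫ x, u x * F n x) atTop (𝓝 (∫ x, u x * G x)) := by
  apply tendsto_integral_of_dominated_convergence (fun x => ‖u x‖ * B x)
  · intro n
    exact hu.aestronglyMeasurable.mul (hF n).aestronglyMeasurable
  · exact hu.norm.integrable_mul hB
  · intro n
    filter_upwards with x
    rw [norm_mul]
    exact mul_le_mul_of_nonneg_left (hFB n x) (norm_nonneg _)
  · filter_upwards with x
    apply tendsto_const_nhds.congr'
    filter_upwards [hlim x] with n hn
    rw [hn]

lemma aux_cut_test (φ : 𝓢(Esp N, ℂ)) (n : ℕ) : TestFun (fun x => auxCut N n x * φ x) :=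
  ⟨(auxCut_smooth n).mul (φ.smooth _), (auxCut_cpt n).mul_right⟩

lemma aux_cut_ev (φ : 𝓢(Esp N, ℂ)) (x : Esp N) : ∀ᶠ n : ℕ in atTop,
    (fun x => auxCut N n x * φ x) =ᶠ[𝓝 x] φ := by
  filter_upwards [auxCut_ev x] with n hn
  filter_upwards [hn] with y hy
  simp [hy]

lemma aux_grad_schwartz {u v : Esp N → ℂ} (hu : MemLp u 2 volume) (hv : MemLp v 2 volume)
    (i : Fin N) (h : IsWeakPDeriv u i v) (φ : 𝓢(Esp N, ℂ)) :
    ∫ x, u x * pderivC i φ x = - ∫ x, v x * φ x := by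
  obtain ⟨C, hC0, hC⟩ := auxCut_bd (N := N)
  have hsm : ContDiff ℝ (⊤ : ℕ∞) φ := φ.smooth _
  have hd := aux_smooth_diff hsm
  have e1 := aux_tendsto_cut hv (fun n x => auxCut N n x * φ x)
    (fun n => (aux_cut_test φ n).1.continuous) φ
    (fun x => (aux_cut_ev φ x).mono fun n hn => hn.eq_of_nhds) (fun x => C * ‖φ x‖)
    ((φ.memLp 2 volume).norm.const_mul C) (fun n x => by
      rw [norm_mul]; exact mul_le_mul_of_nonneg_right (hC n x).1 (norm_nonneg _))
  have e2 := aux_tendsto_cut hu (fun n => pderivC i (fun x => auxCut N n x * φ x))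
    (fun n => (aux_pderiv_smooth i (aux_cut_test φ n).1).continuous) (pderivC i φ)
    (fun x => (aux_cut_ev φ x).mono fun n hn => (aux_pderiv_congr i hn).eq_of_nhds)
    (fun x => C * ‖pderivC i φ x‖ + C * ‖φ x‖)
    (by
      rw [aux_pderiv_schwartz]
      exact ((SchwartzMap.memLp _ 2 volume).norm.const_mul C).add
        ((φ.memLp 2 volume).norm.const_mul C)) (fun n x => by
      rw [aux_pderiv_mul i (aux_smooth_diff (auxCut_smooth n)) hd]
      refine (norm_add_le _ _).trans ?_
      rw [norm_mul, norm_mul]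
      exact add_le_add (mul_le_mul_of_nonneg_right (hC n x).1 (norm_nonneg _))
        (mul_le_mul_of_nonneg_right ((hC n x).2.1 i) (norm_nonneg _)))
  refine tendsto_nhds_unique e2 ?_
  refine e1.neg.congr fun n => ?_
  exact (h _ (aux_cut_test φ n)).symm

lemma aux_lap_congr {f g : Esp N → ℂ} {x : Esp N} (h : f =ᶠ[𝓝 x] g) : lapC f x = lapC g x := by
  unfold lapC
  exact Finset.sum_congr rfl fun i _ =>
    (aux_pderiv_congr i (aux_pderiv_congr i h)).eq_of_nhds

lemma aux_lap_schwartz {u v : Esp N → ℂ} (hu : MemLp u 2 volume) (hv : MemLp v 2 volume)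
    (h : IsWeakLap u v) (φ : 𝓢(Esp N, ℂ)) :
    ∫ x, u x * lapC φ x = ∫ x, v x * φ x := by
  obtain ⟨C, hC0, hC⟩ := auxCut_bd (N := N)
  have hsm : ContDiff ℝ (⊤ : ℕ∞) φ := φ.smooth _
  have hd := aux_smooth_diff hsm
  have e1 := aux_tendsto_cut hv (fun n x => auxCut N n x * φ x)
    (fun n => (aux_cut_test φ n).1.continuous) φ
    (fun x => (aux_cut_ev φ x).mono fun n hn => hn.eq_of_nhds) (fun x => C * ‖φ x‖)
    ((φ.memLp 2 volume).norm.const_mul C) (fun n x => by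
      rw [norm_mul]; exact mul_le_mul_of_nonneg_right (hC n x).1 (norm_nonneg _))
  have e2 := aux_tendsto_cut hu (fun n => lapC (fun x => auxCut N n x * φ x))
    (fun n => by
      unfold lapC
      exact continuous_finsetSum _ fun i _ =>
        (aux_pderiv_smooth i (aux_pderiv_smooth i (aux_cut_test φ n).1)).continuous) (lapC φ)
    (fun x => (aux_cut_ev φ x).mono fun n hn => aux_lap_congr hn)
    (fun x => ∑ i, (C * ‖pderivC i (pderivC i φ) x‖ + C * ‖pderivC i φ x‖ +
      (C * ‖pderivC i φ x‖ + C * ‖φ x‖)))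
    (by
      refine memLp_finsetSum _ fun i _ => ?_
      have a : MemLp (pderivC i φ) 2 volume := by
        rw [aux_pderiv_schwartz]; exact SchwartzMap.memLp _ 2 volume
      have b : MemLp (pderivC i (pderivC i φ)) 2 volume := by
        rw [aux_pderiv_schwartz, aux_pderiv_schwartz]; exact SchwartzMap.memLp _ 2 volume
      exact ((b.norm.const_mul C).add (a.norm.const_mul C)).add
        ((a.norm.const_mul C).add ((φ.memLp 2 volume).norm.const_mul C))) (fun n x => by
      unfold lapC
      refine (norm_sum_le _ _).trans (Finset.sum_le_sum fun i _ => ?_)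
      have hcs := auxCut_smooth (N := N) n
      rw [aux_pderiv_mul i (aux_smooth_diff hcs) hd, aux_pderiv_add i
        (aux_smooth_diff (hcs.mul (aux_pderiv_smooth i hsm)))
        (aux_smooth_diff ((aux_pderiv_smooth i hcs).mul hsm)),
        aux_pderiv_mul i (aux_smooth_diff hcs) (aux_smooth_diff (aux_pderiv_smooth i hsm)),
        aux_pderiv_mul i (aux_smooth_diff (aux_pderiv_smooth i hcs)) hd]
      refine (norm_add_le _ _).trans ?_
      obtain ⟨q0, q1, q2⟩ := hC n x
      refine add_le_add ((norm_add_le _ _).trans ?_) ((norm_add_le _ _).trans ?_) <;>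
      · rw [norm_mul, norm_mul]
        gcongr
        all_goals first | exact q0 | exact q1 i | exact q2 i)
  refine tendsto_nhds_unique e2 ?_
  refine e1.congr fun n => ?_
  exact (h _ (aux_cut_test φ n)).symm

end cutoff

section fourier
variable {N : ℕ}

abbrev L2E (N : ℕ) := Lp ℂ 2 (volume : Measure (Esp N))

lemma aux_pairing (f : L2E N) (φ : 𝓢(Esp N, ℂ)) :
    ∫ x, φ x * (𝓕 f : L2E N) x = ∫ x, (𝓕 φ : 𝓢(Esp N, ℂ)) x * f x := by
  have h := congrArg (fun T => T φ) (Lp.fourier_toTemperedDistribution_eq f)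
  simp only [TemperedDistribution.fourier_apply, Lp.toTemperedDistribution_apply, smul_eq_mul] at h
  exact h.symm

/-- uniqueness from testing -/
lemma aux_ae_of_test {f g : Esp N → ℂ} (hf : LocallyIntegrable f volume)
    (hg : LocallyIntegrable g volume)
    (h : ∀ φ : 𝓢(Esp N, ℂ), HasCompactSupport φ → ∫ x, φ x * f x = ∫ x, φ x * g x) :
    f =ᵐ[volume] g := by
  refine ae_eq_of_integral_contDiff_smul_eq hf hg fun φ hφ hc => ?_
  have hc' : HasCompactSupport (fun x => ((φ x : ℝ) : ℂ)) :=
    hc.comp_left (g := Complex.ofReal) (by simp)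
  have hs' : ContDiff ℝ (⊤ : ℕ∞) (fun x => ((φ x : ℝ) : ℂ)) :=
    Complex.ofRealCLM.contDiff.comp hφ
  have := h (hc'.toSchwartzMap hs') hc'
  simpa using this

lemma aux_locInt {f : Esp N → ℂ} (hf : MemLp f 2 volume) : LocallyIntegrable f volume :=
  hf.locallyIntegrable (by norm_num)

lemma aux_growth (i : Fin N) :
    (fun x : Esp N => inner ℝ x (EuclideanSpace.single i (1:ℝ))).HasTemperateGrowth := by fun_prop

lemma aux_inner_single (i : Fin N) (x : Esp N) :
    inner ℝ x (EuclideanSpace.single i (1:ℝ)) = x i := by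
  simp [EuclideanSpace.inner_single_right]

/-- multiplication of Schwartz function by coordinate -/
lemma aux_pderiv_fourier (i : Fin N) (φ : 𝓢(Esp N, ℂ)) :
    ∃ ψ : 𝓢(Esp N, ℂ), pderivC i (𝓕 φ : 𝓢(Esp N, ℂ)) = (𝓕 ψ : 𝓢(Esp N, ℂ)) ∧
      ∀ x, ψ x = -(2 * Real.pi * Complex.I) * (x i * φ x) := by
  refine ⟨-(2 * Real.pi * Complex.I) • SchwartzMap.smulLeftCLM ℂ
    (fun x : Esp N => inner ℝ x (EuclideanSpace.single i (1:ℝ))) φ, ?_, ?_⟩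
  · rw [aux_pderiv_schwartz, SchwartzMap.lineDerivOp_fourier_eq]
  · intro x
    simp [SchwartzMap.smulLeftCLM_apply_apply (aux_growth i)]
    exact Or.inl (aux_inner_single i x)

lemma aux_hat_grad {u v : Esp N → ℂ} (hu : MemLp u 2 volume) (hv : MemLp v 2 volume)
    (i : Fin N) (h : IsWeakPDeriv u i v) :
    (𝓕 (hv.toLp v) : L2E N) =ᵐ[volume]
      fun ξ => (2 * Real.pi * Complex.I) * (ξ i * (𝓕 (hu.toLp u) : L2E N) ξ) := by
  have hcont : Continuous fun ξ : Esp N => (2 * Real.pi * Complex.I) * (ξ i : ℂ) := by fun_prop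
  refine aux_ae_of_test (aux_locInt (Lp.memLp _)) ?_ fun φ hφ => ?_
  · have := (aux_locInt (Lp.memLp (𝓕 (hu.toLp u) : L2E N))).locallyIntegrableOn Set.univ
    have h2 := this.continuousOn_mul hcont.continuousOn isOpen_univ.isLocallyClosed
    rw [locallyIntegrableOn_univ] at h2
    refine h2.congr ?_
    filter_upwards with x
    ring
  · obtain ⟨ψ, h1, h2⟩ := aux_pderiv_fourier i φ
    have e1 := aux_pairing (hv.toLp v) φ
    have e2 := aux_pairing (hu.toLp u) ψ
    have e3 := aux_grad_schwartz hu hv i h (𝓕 φ)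
    rw [h1] at e3
    have c1 : ∫ x, (𝓕 φ : 𝓢(Esp N, ℂ)) x * (hv.toLp v) x = ∫ x, v x * (𝓕 φ : 𝓢(Esp N, ℂ)) x := by
      refine integral_congr_ae ?_
      filter_upwards [hv.coeFn_toLp] with x hx
      rw [hx, mul_comm]
    have c2 : ∫ x, (𝓕 ψ : 𝓢(Esp N, ℂ)) x * (hu.toLp u) x = ∫ x, u x * (𝓕 ψ : 𝓢(Esp N, ℂ)) x := by
      refine integral_congr_ae ?_
      filter_upwards [hu.coeFn_toLp] with x hx
      rw [hx, mul_comm]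
    rw [e1, c1, ← neg_eq_iff_eq_neg.2 e3, ← c2, ← e2, ← integral_neg]
    refine integral_congr_ae ?_
    filter_upwards with x
    rw [h2]
    ring

lemma aux_hat_lap {u v : Esp N → ℂ} (hu : MemLp u 2 volume) (hv : MemLp v 2 volume)
    (h : IsWeakLap u v) :
    (𝓕 (hv.toLp v) : L2E N) =ᵐ[volume]
      fun ξ => -(((4 * Real.pi ^ 2 * ‖ξ‖ ^ 2 : ℝ) : ℂ)) * (𝓕 (hu.toLp u) : L2E N) ξ := by
  have hcont : Continuous fun ξ : Esp N => -(((4 * Real.pi ^ 2 * ‖ξ‖ ^ 2 : ℝ) : ℂ)) := by fun_prop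
  refine aux_ae_of_test (aux_locInt (Lp.memLp _)) ?_ fun φ hφ => ?_
  · have := (aux_locInt (Lp.memLp (𝓕 (hu.toLp u) : L2E N))).locallyIntegrableOn Set.univ
    have h2 := this.continuousOn_mul hcont.continuousOn isOpen_univ.isLocallyClosed
    rw [locallyIntegrableOn_univ] at h2
    exact h2
  · choose ψ h1 h2 using fun i => aux_pderiv_fourier i φ
    choose χ h3 h4 using fun i => aux_pderiv_fourier i (ψ i)
    have e1 := aux_pairing (hv.toLp v) φ
    have e2 := fun i => aux_pairing (hu.toLp u) (χ i)
    have e3 := aux_lap_schwartz hu hv h (𝓕 φ)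
    have c1 : ∫ x, (𝓕 φ : 𝓢(Esp N, ℂ)) x * (hv.toLp v) x = ∫ x, v x * (𝓕 φ : 𝓢(Esp N, ℂ)) x := by
      refine integral_congr_ae ?_
      filter_upwards [hv.coeFn_toLp] with x hx
      rw [hx, mul_comm]
    have c2 : ∀ i, ∫ x, (𝓕 (χ i) : 𝓢(Esp N, ℂ)) x * (hu.toLp u) x =
        ∫ x, u x * (𝓕 (χ i) : 𝓢(Esp N, ℂ)) x := by
      intro i
      refine integral_congr_ae ?_
      filter_upwards [hu.coeFn_toLp] with x hx
      rw [hx, mul_comm]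
    have c3 : ∫ x, u x * lapC (𝓕 φ : 𝓢(Esp N, ℂ)) x =
        ∑ i, ∫ x, (χ i) x * (𝓕 (hu.toLp u) : L2E N) x := by
      simp_rw [e2, c2]
      rw [← integral_finsetSum]
      · refine integral_congr_ae ?_
        filter_upwards with x
        rw [← Finset.mul_sum]
        unfold lapC
        simp_rw [h1, h3]
      · intro i _
        exact aux_int_mul hu _
    rw [e1, c1, ← e3, c3, ← integral_finsetSum]
    · refine integral_congr_ae ?_
      filter_upwards with x
      have hn : ‖x‖ ^ 2 = ∑ i, (x i) ^ 2 := EuclideanSpace.real_norm_sq_eq x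
      simp_rw [h4, h2]
      rw [hn]
      push_cast
      rw [Finset.mul_sum, ← Finset.sum_neg_distrib, Finset.sum_mul, Finset.mul_sum]
      refine Finset.sum_congr rfl fun i _ => ?_
      have : Complex.I * Complex.I = -1 := Complex.I_mul_I
      linear_combination (4 * Real.pi ^ 2 * (x i) ^ 2 * φ x * (𝓕 (hu.toLp u) : L2E N) x : ℂ) * this
    · intro i _
      refine (aux_int_mul (Lp.memLp (𝓕 (hu.toLp u) : L2E N)) (χ i)).congr ?_
      filter_upwards with x
      ring

/-- `L²` inverse transform of an `L¹ ∩ L²` function is the integral one. -/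
lemma aux_L1L2 {f : Esp N → ℂ} (h1 : Integrable f volume) (h2 : MemLp f 2 volume) :
    (𝓕⁻ (h2.toLp f) : L2E N) =ᵐ[volume] 𝓕⁻ f := by
  have hcont : Continuous (𝓕⁻ f) := by
    have := VectorFourier.fourierIntegral_continuous (e := Real.fourierChar) (μ := volume)
      (L := -innerₗ (Esp N)) Real.continuous_fourierChar (by simp; fun_prop) h1
    exact this
  refine aux_ae_of_test (aux_locInt (Lp.memLp _)) hcont.locallyIntegrable fun φ hφ => ?_
  have e := aux_pairing (𝓕⁻ (h2.toLp f) : L2E N) (𝓕⁻ φ)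
  rw [FourierTransform.fourier_fourierInv_eq, FourierTransform.fourier_fourierInv_eq] at e
  rw [← e]
  have h3 := VectorFourier.integral_fourierIntegral_smul_eq_flip (e := Real.fourierChar)
    (μ := volume) (ν := volume)
    (L := -innerₗ (Esp N)) Real.continuous_fourierChar (by simp; fun_prop) φ.integrable h1
  have hflip : (-innerₗ (Esp N)).flip = -innerₗ (Esp N) := by
    ext x y
    simp [real_inner_comm]
  rw [hflip] at h3
  have h4 : ∫ x, φ x * (𝓕⁻ f) x = ∫ x, (𝓕⁻ (φ : Esp N → ℂ)) x * f x := h3.symm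
  rw [h4, ← SchwartzMap.fourierInv_coe]
  refine integral_congr_ae ?_
  filter_upwards [h2.coeFn_toLp] with x hx
  rw [hx]

end fourier

section coercive
variable {N : ℕ}

lemma aux_sq_norm {f : Esp N → ℂ} (hf : MemLp f 2 volume) :
    ∫ x, ‖f x‖ ^ 2 = ‖(hf.toLp f : L2E N)‖ ^ 2 := by
  rw [← @inner_self_eq_norm_sq ℂ, L2.inner_def]
  have : ∫ a, inner ℂ ((hf.toLp f : L2E N) a) ((hf.toLp f : L2E N) a) =
      ∫ x, ((‖f x‖ ^ 2 : ℝ) : ℂ) := by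
    refine integral_congr_ae ?_
    filter_upwards [hf.coeFn_toLp] with x hx
    rw [hx, inner_self_eq_norm_sq_to_K]
    simp
  rw [this, integral_complex_ofReal]
  simp

lemma aux_sq_norm' (f : L2E N) : ∫ x, ‖f x‖ ^ 2 = ‖f‖ ^ 2 := by
  have := aux_sq_norm (Lp.memLp f)
  rwa [Lp.toLp_coeFn] at this

/-- L² classes -/
def H2.U2 (U : H2 N) : L2E N := U.u_mem.toLp U.u
def H2.G2 (U : H2 N) (i : Fin N) : L2E N := (U.grad_mem i).toLp (U.grad i)
def H2.W2 (U : H2 N) : L2E N := U.lapl_mem.toLp U.lapl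

lemma H2.massSq_eq (U : H2 N) : U.massSq = ‖U.U2‖ ^ 2 := aux_sq_norm U.u_mem
lemma H2.lapSq_eq (U : H2 N) : U.lapSq = ‖U.W2‖ ^ 2 := aux_sq_norm U.lapl_mem
lemma H2.gradSq_eq (U : H2 N) : U.gradSq = ∑ i, ‖U.G2 i‖ ^ 2 :=
  Finset.sum_congr rfl fun i _ => aux_sq_norm (U.grad_mem i)

lemma H2.hatW (U : H2 N) : (𝓕 U.W2 : L2E N) =ᵐ[volume]
      fun ξ => -(((4 * Real.pi ^ 2 * ‖ξ‖ ^ 2 : ℝ) : ℂ)) * (𝓕 U.U2 : L2E N) ξ :=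
  aux_hat_lap U.u_mem U.lapl_mem U.lapl_spec

lemma H2.gradSq_inner (U : H2 N) : U.gradSq = - (inner ℂ U.U2 U.W2 : ℂ).re := by
  rw [U.gradSq_eq, ← Lp.inner_fourier_eq, L2.inner_def]
  have h1 : ∀ i, ‖U.G2 i‖ ^ 2 = ∫ ξ, ‖(𝓕 (U.G2 i) : L2E N) ξ‖ ^ 2 := fun i => by
    rw [aux_sq_norm', Lp.norm_fourier_eq]
  have hG : ∀ i, (𝓕 (U.G2 i) : L2E N) =ᵐ[volume] fun ξ =>
      (2 * Real.pi * Complex.I) * (ξ i * (𝓕 U.U2 : L2E N) ξ) :=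
    fun i => aux_hat_grad U.u_mem (U.grad_mem i) i (U.grad_spec i)
  simp_rw [h1]
  rw [← integral_finsetSum]
  · have hintg : Integrable (fun a => inner ℂ ((𝓕 U.U2 : L2E N) a) ((𝓕 U.W2 : L2E N) a)) volume :=
      L2.integrable_inner _ _
    have : (∫ a, inner ℂ ((𝓕 U.U2 : L2E N) a) ((𝓕 U.W2 : L2E N) a)).re =
      ∫ a, (inner ℂ ((𝓕 U.U2 : L2E N) a) ((𝓕 U.W2 : L2E N) a)).re :=
      (integral_re hintg).symm
    rw [this, ← integral_neg]
    refine integral_congr_ae ?_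
    filter_upwards [U.hatW, ae_all_iff.2 hG] with ξ h2 h3
    rw [h2]
    simp_rw [h3]
    have hn : ‖ξ‖ ^ 2 = ∑ i, (ξ i) ^ 2 := EuclideanSpace.real_norm_sq_eq ξ
    have e1 : inner ℂ ((𝓕 U.U2 : L2E N) ξ) (-(((4 * Real.pi ^ 2 * ‖ξ‖ ^ 2 : ℝ) : ℂ)) *
        (𝓕 U.U2 : L2E N) ξ) = ((-(4 * Real.pi ^ 2 * ‖ξ‖ ^ 2) * ‖(𝓕 U.U2 : L2E N) ξ‖ ^ 2 : ℝ) : ℂ) := by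
      rw [← smul_eq_mul, inner_smul_right, inner_self_eq_norm_sq_to_K]
      push_cast
      rfl
    rw [e1, Complex.ofReal_re, hn, Finset.mul_sum, ← Finset.sum_neg_distrib, Finset.sum_mul,
      ← Finset.sum_neg_distrib]
    refine Finset.sum_congr rfl fun i _ => ?_
    simp only [norm_mul, Complex.norm_real, Complex.norm_I, Complex.norm_ofNat, Real.norm_eq_abs]
    rw [abs_of_pos Real.pi_pos, mul_pow, mul_pow |ξ i|, sq_abs]
    ring
  · intro i _
    exact (Lp.memLp _).integrable_norm_pow (by norm_num)

lemma H2.Tfun_eq (U : H2 N) (c : ℝ) :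
    Tfun c U = ‖U.W2 + U.U2‖ ^ 2 + c * ‖U.U2‖ ^ 2 := by
  unfold Tfun
  rw [U.massSq_eq, U.lapSq_eq, U.gradSq_inner, @norm_add_sq ℂ]
  have : RCLike.re (inner ℂ U.W2 U.U2) = (inner ℂ U.U2 U.W2).re := inner_re_symm (𝕜 := ℂ) _ _
  rw [this]
  ring

lemma H2.Tfun_nonneg (U : H2 N) {c : ℝ} (hc : 0 < c) : 0 ≤ Tfun c U := by
  rw [U.Tfun_eq]; positivity

lemma H2.mass_le (U : H2 N) {c : ℝ} (hc : 0 < c) : ‖U.U2‖ ^ 2 ≤ c⁻¹ * Tfun c U := by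
  rw [U.Tfun_eq, le_inv_mul_iff₀ hc]
  nlinarith [sq_nonneg ‖U.W2 + U.U2‖]

lemma H2.lap_le (U : H2 N) {c : ℝ} (hc : 0 < c) : ‖U.W2‖ ^ 2 ≤ (2 + 2 * c⁻¹) * Tfun c U := by
  have h1 := U.mass_le hc
  have h2 : ‖U.W2‖ ≤ ‖U.W2 + U.U2‖ + ‖U.U2‖ := by
    have := norm_sub_le (U.W2 + U.U2) U.U2
    rwa [add_sub_cancel_right] at this
  have h3 : ‖U.W2 + U.U2‖ ^ 2 ≤ Tfun c U := by
    rw [U.Tfun_eq]; nlinarith [sq_nonneg ‖U.U2‖]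
  have h4 : ‖U.W2‖ ^ 2 ≤ 2 * ‖U.W2 + U.U2‖ ^ 2 + 2 * ‖U.U2‖ ^ 2 := by
    have := pow_le_pow_left₀ (norm_nonneg _) h2 2
    nlinarith [sq_nonneg (‖U.W2 + U.U2‖ - ‖U.U2‖)]
  nlinarith

lemma H2.grad_le (U : H2 N) {c : ℝ} (hc : 0 < c) (i : Fin N) :
    ‖U.G2 i‖ ^ 2 ≤ (2 + 3 * c⁻¹) * Tfun c U := by
  have h1 := U.mass_le hc
  have h2 := U.lap_le hc
  have h3 : ‖U.G2 i‖ ^ 2 ≤ U.gradSq := by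
    rw [U.gradSq_eq]
    exact Finset.single_le_sum (f := fun i => ‖U.G2 i‖ ^ 2) (fun j _ => by positivity) (Finset.mem_univ i)
  have h4 : U.gradSq ≤ ‖U.U2‖ * ‖U.W2‖ := by
    rw [U.gradSq_inner]
    exact (neg_le_abs _).trans ((Complex.abs_re_le_norm _).trans (norm_inner_le_norm _ _))
  nlinarith [sq_nonneg (‖U.U2‖ - ‖U.W2‖), sq_nonneg ‖U.U2‖, sq_nonneg ‖U.W2‖]

end coercive

section lowfreq
variable {N : ℕ}

/-- interpolation between `L²` and `L^∞` -/
lemma aux_interp {g : Esp N → ℂ} {p : ℝ} (hp : 2 < p) {M : ℝ≥0∞}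
    (hMt : M ≠ ∞) (hM : ∀ x, ‖g x‖ₑ ≤ M) :
    eLpNorm g (ENNReal.ofReal p) volume ≤ M ^ (1 - 2 / p) * (eLpNorm g 2 volume) ^ (2 / p) := by
  have hp0 : 0 < p := by linarith
  have e1 : eLpNorm g (ENNReal.ofReal p) volume = (∫⁻ x, ‖g x‖ₑ ^ p) ^ (1 / p) := by
    rw [eLpNorm_eq_lintegral_rpow_enorm_toReal (by simpa using hp0) (by simp)]
    rw [ENNReal.toReal_ofReal hp0.le]
  have e2 : eLpNorm g 2 volume = (∫⁻ x, ‖g x‖ₑ ^ (2:ℝ)) ^ (1 / (2:ℝ)) := by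
    rw [eLpNorm_eq_lintegral_rpow_enorm_toReal (by simp) (by simp)]
    simp
  rw [e1, e2, ← ENNReal.rpow_mul]
  have e3 : ∫⁻ x, ‖g x‖ₑ ^ p ≤ M ^ (p - 2) * ∫⁻ x, ‖g x‖ₑ ^ (2:ℝ) := by
    rw [← lintegral_const_mul' _ _ (ENNReal.rpow_ne_top_of_nonneg (by linarith) hMt)]
    refine lintegral_mono fun x => ?_
    have : ‖g x‖ₑ ^ p = ‖g x‖ₑ ^ (p - 2) * ‖g x‖ₑ ^ (2:ℝ) := by
      rw [← ENNReal.rpow_add_of_nonneg _ _ (by linarith) (by norm_num)]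
      congr 1; ring
    rw [this]
    refine mul_le_mul_left ?_ _
    exact ENNReal.rpow_le_rpow (hM x) (by linarith)
  calc _ ≤ (M ^ (p - 2) * ∫⁻ x, ‖g x‖ₑ ^ (2:ℝ)) ^ (1 / p) := by gcongr
    _ = _ := by
      rw [ENNReal.mul_rpow_of_nonneg _ _ (by positivity), ← ENNReal.rpow_mul]
      congr 2 <;> field_simp

/-- inverse Fourier integral restricted to a set -/
def auxP (S : Set (Esp N)) (f : Esp N → ℂ) : Esp N → ℂ := 𝓕⁻ (S.indicator f)

lemma aux_ind_L1 {S : Set (Esp N)} (hS : MeasurableSet S) (hfin : volume S ≠ ∞) {f : Esp N → ℂ}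
    (hf : MemLp f 2 volume) : Integrable (S.indicator f) volume := by
  rw [integrable_indicator_iff hS]
  have h2 : MemLp f 2 (volume.restrict S) := hf.restrict S
  have : IsFiniteMeasure (volume.restrict S) := ⟨by simpa using hfin.lt_top⟩
  exact h2.integrable (by norm_num)

lemma auxP_sup {S : Set (Esp N)} (hS : MeasurableSet S) {f : Esp N → ℂ}
    (hf : MemLp f 2 volume) (x : Esp N) :
    ‖auxP S f x‖ₑ ≤ (volume S) ^ (1 / 2 : ℝ) * eLpNorm (S.indicator f) 2 volume := by
  have h1 : ‖auxP S f x‖ₑ ≤ ∫⁻ ξ, ‖S.indicator f ξ‖ₑ := by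
    unfold auxP
    rw [Real.fourierInv_eq]
    refine (enorm_integral_le_lintegral_enorm _).trans (le_of_eq ?_)
    refine lintegral_congr fun ξ => ?_
    rw [← ofReal_norm, ← ofReal_norm, Circle.norm_smul]
  refine h1.trans ?_
  have h2 : ∫⁻ ξ, ‖S.indicator f ξ‖ₑ = eLpNorm f 1 (volume.restrict S) := by
    rw [eLpNorm_one_eq_lintegral_enorm, ← lintegral_indicator hS]
    refine lintegral_congr fun ξ => ?_
    by_cases h : ξ ∈ S <;> simp [h]
  rw [h2, eLpNorm_indicator_eq_eLpNorm_restrict hS, mul_comm]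
  have := eLpNorm_le_eLpNorm_mul_rpow_measure_univ (p := 1) (q := 2) (by norm_num)
    (hf.restrict S).aestronglyMeasurable
  refine this.trans (le_of_eq ?_)
  simp
  norm_num

lemma auxP_ae {S : Set (Esp N)} (hS : MeasurableSet S) (hfin : volume S ≠ ∞) {f : Esp N → ℂ}
    (hf : MemLp f 2 volume) :
    (𝓕⁻ ((hf.indicator hS).toLp (S.indicator f)) : L2E N) =ᵐ[volume] auxP S f :=
  aux_L1L2 (aux_ind_L1 hS hfin hf) (hf.indicator hS)

lemma aux_norm_inv (f : L2E N) : ‖(𝓕⁻ f : L2E N)‖ = ‖f‖ := by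
  have := Lp.norm_fourier_eq (𝓕⁻ f : L2E N)
  rw [FourierTransform.fourier_fourierInv_eq] at this
  exact this.symm

lemma auxP_L2 {S : Set (Esp N)} (hS : MeasurableSet S) (hfin : volume S ≠ ∞) {f : Esp N → ℂ}
    (hf : MemLp f 2 volume) :
    eLpNorm (auxP S f) 2 volume = eLpNorm (S.indicator f) 2 volume := by
  rw [← eLpNorm_congr_ae (auxP_ae hS hfin hf), ← Lp.enorm_def, ← ofReal_norm, aux_norm_inv,
    ofReal_norm, Lp.enorm_def]
  exact eLpNorm_congr_ae (MemLp.coeFn_toLp _)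

lemma auxP_cont {S : Set (Esp N)} (hS : MeasurableSet S) (hfin : volume S ≠ ∞) {f : Esp N → ℂ}
    (hf : MemLp f 2 volume) : Continuous (auxP S f) :=
  VectorFourier.fourierIntegral_continuous (e := Real.fourierChar) (μ := volume)
      (L := -innerₗ (Esp N)) Real.continuous_fourierChar (by simp; fun_prop)
      (aux_ind_L1 hS hfin hf)

lemma auxP_Lp {S : Set (Esp N)} (hS : MeasurableSet S) (hfin : volume S ≠ ∞) {f : Esp N → ℂ}
    (hf : MemLp f 2 volume) {p : ℝ} (hp : 2 < p) :
    eLpNorm (auxP S f) (ENNReal.ofReal p) volume ≤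
      (volume S) ^ (1 / 2 * (1 - 2 / p)) * eLpNorm (S.indicator f) 2 volume := by
  refine (aux_interp hp (ENNReal.mul_ne_top (ENNReal.rpow_ne_top_of_nonneg (by norm_num) hfin)
    (hf.indicator hS).eLpNorm_ne_top) (auxP_sup hS hf)).trans ?_
  have hq : 0 ≤ 1 - 2 / p := by
    rw [sub_nonneg, div_le_one (by linarith)]; exact hp.le
  rw [auxP_L2 hS hfin hf, ENNReal.mul_rpow_of_nonneg _ _ hq, ← ENNReal.rpow_mul, mul_assoc,
    ← ENNReal.rpow_add_of_nonneg _ _ hq (by positivity)]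
  simp

end lowfreq

section tail
variable {N : ℕ}

def auxB (N k : ℕ) : Set (Esp N) := Metric.ball 0 ((2:ℝ) ^ k)
def auxS (N k : ℕ) : Set (Esp N) := auxB N (k+1) \ auxB N k

lemma auxB_meas (k : ℕ) : MeasurableSet (auxB N k) := measurableSet_ball
lemma auxB_fin (k : ℕ) : volume (auxB N k) ≠ ∞ := measure_ball_lt_top.ne
lemma auxS_meas (k : ℕ) : MeasurableSet (auxS N k) := (auxB_meas _).diff (auxB_meas _)
lemma auxS_fin (k : ℕ) : volume (auxS N k) ≠ ∞ :=
  ((measure_mono Set.sdiff_subset).trans_lt (auxB_fin (k+1)).lt_top).ne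
lemma auxB_mono (k : ℕ) : auxB N k ⊆ auxB N (k+1) :=
  Metric.ball_subset_ball (pow_le_pow_right₀ (by norm_num) (by omega))

/-- low-frequency part -/
def H2.low (U : H2 N) (K : ℕ) : Esp N → ℂ := auxP (auxB N K) (𝓕 U.U2 : L2E N)

lemma H2.high_le (U : H2 N) {S : Set (Esp N)} (k : ℕ) (h : ∀ ξ ∈ S, ξ ∉ auxB N k) :
    eLpNorm (S.indicator (𝓕 U.U2 : L2E N)) 2 volume ≤
      ENNReal.ofReal ((1/4) ^ k) * eLpNorm U.lapl 2 volume := by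
  have e : eLpNorm U.lapl 2 volume = eLpNorm (𝓕 U.W2 : L2E N) 2 volume := by
    rw [← Lp.enorm_def, ← ofReal_norm, Lp.norm_fourier_eq, ofReal_norm, Lp.enorm_def]
    exact (eLpNorm_congr_ae (MemLp.coeFn_toLp _)).symm
  rw [e]
  refine eLpNorm_le_mul_eLpNorm_of_ae_le_mul ?_ _
  filter_upwards [U.hatW] with ξ hξ
  by_cases hS : ξ ∈ S
  · have h1 : (2:ℝ) ^ k ≤ ‖ξ‖ := by
      have := h ξ hS
      simpa [auxB] using this
    rw [Set.indicator_of_mem hS, hξ, norm_mul, norm_neg, Complex.norm_real,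
      Real.norm_of_nonneg (by positivity), ← mul_assoc]
    refine le_mul_of_one_le_left (norm_nonneg _) ?_
    have h2 : (4:ℝ) ^ k ≤ ‖ξ‖ ^ 2 := by
      have := pow_le_pow_left₀ (by positivity) h1 2
      rw [← pow_mul, mul_comm, pow_mul] at this
      norm_num at this
      exact this
    have h3 : (1:ℝ) ≤ 4 * Real.pi ^ 2 := by nlinarith [Real.pi_gt_three]
    have h4 : (4:ℝ) ^ k ≤ 4 * Real.pi ^ 2 * ‖ξ‖ ^ 2 := by nlinarith [sq_nonneg ‖ξ‖]
    rw [one_div, inv_pow]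
    rw [le_inv_mul_iff₀ (by positivity)]
    linarith
  · rw [Set.indicator_of_notMem hS, norm_zero]
    positivity

lemma H2.tail2 (U : H2 N) (K : ℕ) :
    eLpNorm (fun x => U.u x - U.low K x) 2 volume ≤
      ENNReal.ofReal ((1/4) ^ K) * eLpNorm U.lapl 2 volume := by
  have hf := Lp.memLp (𝓕 U.U2 : L2E N)
  have hm := auxB_meas (N := N) K
  refine le_trans (le_of_eq ?_) (U.high_le (S := (auxB N K)ᶜ) K (fun ξ h => h))
  have h1 : (fun x => U.u x - U.low K x) =ᵐ[volume]
      (𝓕⁻ ((hf.indicator hm.compl).toLp _) : L2E N) := by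
    have e1 : ((hf.indicator hm.compl).toLp _ : L2E N) =
        (𝓕 U.U2 : L2E N) - ((hf.indicator hm).toLp _ : L2E N) := by
      ext1
      filter_upwards [(hf.indicator hm.compl).coeFn_toLp, (hf.indicator hm).coeFn_toLp,
        Lp.coeFn_sub (𝓕 U.U2 : L2E N) ((hf.indicator hm).toLp _ : L2E N)] with ξ a b c
      rw [a, c, Pi.sub_apply, b, Set.indicator_compl, Pi.sub_apply]
    have e2 : (𝓕⁻ ((hf.indicator hm.compl).toLp _ : L2E N) : L2E N) =
        U.U2 - (𝓕⁻ ((hf.indicator hm).toLp _ : L2E N) : L2E N) := by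
      rw [e1]
      have : ∀ a b : L2E N, (𝓕⁻ (a - b) : L2E N) = 𝓕⁻ a - 𝓕⁻ b :=
        fun a b => (Lp.fourierTransformₗᵢ (Esp N) ℂ).symm.map_sub a b
      rw [this, FourierTransform.fourierInv_fourier_eq]
    rw [e2]
    filter_upwards [Lp.coeFn_sub U.U2 (𝓕⁻ ((hf.indicator hm).toLp _ : L2E N) : L2E N),
      U.u_mem.coeFn_toLp, auxP_ae hm (auxB_fin K) hf] with x a b c
    have b2 : (U.U2 : L2E N) x = U.u x := b
    rw [a, Pi.sub_apply, c, b2]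
    rfl
  rw [eLpNorm_congr_ae h1, ← Lp.enorm_def, ← ofReal_norm, aux_norm_inv, ofReal_norm, Lp.enorm_def]
  exact eLpNorm_congr_ae (MemLp.coeFn_toLp _)

lemma H2.low_succ (U : H2 N) (K : ℕ) (x : Esp N) :
    U.low (K+1) x - U.low K x = auxP (auxS N K) (𝓕 U.U2 : L2E N) x := by
  have hf := Lp.memLp (𝓕 U.U2 : L2E N)
  have hintg : ∀ k, Integrable (fun v => Real.fourierChar (inner ℝ v x) •
      (auxB N k).indicator (𝓕 U.U2 : L2E N) v) volume := by
    intro k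
    have := (VectorFourier.fourierIntegral_convergent_iff (e := Real.fourierChar) (μ := volume)
      (L := -innerₗ (Esp N)) Real.continuous_fourierChar (by simp; fun_prop) x).2
      (aux_ind_L1 (auxB_meas k) (auxB_fin k) hf)
    simpa using this
  unfold H2.low auxP
  rw [Real.fourierInv_eq, Real.fourierInv_eq, Real.fourierInv_eq, ← integral_sub]
  · refine integral_congr_ae ?_
    filter_upwards with ξ
    rw [← smul_sub]
    congr 1
    unfold auxS
    by_cases h1 : ξ ∈ auxB N K
    · rw [Set.indicator_of_mem h1, Set.indicator_of_mem (auxB_mono K h1),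
        Set.indicator_of_notMem (fun h => h.2 h1), sub_self]
    · by_cases h2 : ξ ∈ auxB N (K+1)
      · have h3 : ξ ∈ auxB N (K+1) \ auxB N K := ⟨h2, h1⟩
        rw [Set.indicator_of_notMem h1, Set.indicator_of_mem h2,
          Set.indicator_of_mem h3, sub_zero]
      · rw [Set.indicator_of_notMem h1, Set.indicator_of_notMem h2,
          Set.indicator_of_notMem (fun h => h2 h.1), sub_zero]
  · exact hintg (K+1)
  · exact hintg K

lemma H2.low_cont (U : H2 N) (K : ℕ) : Continuous (U.low K) :=
  auxP_cont (auxB_meas _) (auxB_fin _) (Lp.memLp _)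

/-- the dyadic coefficients -/
def auxb (N : ℕ) (p : ℝ) (k : ℕ) : ℝ≥0∞ :=
  (volume (auxS N k)) ^ (1 / 2 * (1 - 2 / p)) * ENNReal.ofReal ((1/4) ^ k)

lemma auxb_sum {p : ℝ} (hp : 2 < p) (hsub : (N : ℝ) * (1 / 2 - 1 / p) < 2) :
    ∑' k, auxb N p k ≠ ∞ := by
  set v : ℝ≥0∞ := volume (Metric.ball (0 : Esp N) 1) with hv
  have hvt : v ≠ ∞ := measure_ball_lt_top.ne
  have hq : 0 ≤ 1 / 2 * (1 - 2 / p) := by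
    have : 2 / p ≤ 1 := by rw [div_le_one (by linarith)]; exact hp.le
    linarith
  set q := 1 / 2 * (1 - 2 / p) with hqd
  set r : ℝ := (2:ℝ) ^ ((N:ℝ) * q - 2) with hr
  have hr1 : r < 1 := by
    apply Real.rpow_lt_one_of_one_lt_of_neg (by norm_num)
    have : q = 1 / 2 - 1 / p := by rw [hqd]; ring
    rw [this]; linarith
  have hr0 : 0 < r := by positivity
  have hb : ∀ k, auxb N p k ≤ (v ^ q * ENNReal.ofReal ((2:ℝ) ^ ((N:ℝ) * q))) * ENNReal.ofReal r ^ k := by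
    intro k
    have h1 : volume (auxS N k) ≤ ENNReal.ofReal (((2:ℝ) ^ (k+1)) ^ N) * v := by
      refine (measure_mono Set.sdiff_subset).trans ?_
      unfold auxB
      rw [Measure.addHaar_ball_of_pos _ _ (by positivity)]
      simp [hv]
    have h2 : (volume (auxS N k)) ^ q ≤ ENNReal.ofReal ((((2:ℝ) ^ (k+1)) ^ N) ^ q) * v ^ q := by
      refine (ENNReal.rpow_le_rpow h1 hq).trans (le_of_eq ?_)
      rw [ENNReal.mul_rpow_of_nonneg _ _ hq, ENNReal.ofReal_rpow_of_nonneg (by positivity) hq]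
    unfold auxb
    refine (mul_le_mul_left h2 _).trans (le_of_eq ?_)
    rw [mul_right_comm, ← ENNReal.ofReal_mul (by positivity), mul_comm, mul_assoc,
      ← ENNReal.ofReal_pow hr0.le, ← ENNReal.ofReal_mul (by positivity)]
    congr 2
    have e1 : (((2:ℝ) ^ (k+1)) ^ N) ^ q = (2:ℝ) ^ (((k:ℝ)+1) * N * q) := by
      rw [← Real.rpow_natCast, ← Real.rpow_natCast, ← Real.rpow_mul (by positivity),
        ← Real.rpow_mul (by positivity)]
      congr 1; push_cast; ring
    have e2 : ((1:ℝ)/4) ^ k = (2:ℝ) ^ (-2 * (k:ℝ)) := by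
      rw [Real.rpow_mul (by norm_num), Real.rpow_natCast]
      congr 1
      rw [Real.rpow_neg (by norm_num)]; norm_num
    rw [e1, e2, hr, ← Real.rpow_natCast, ← Real.rpow_mul (by norm_num),
      ← Real.rpow_add (by norm_num), ← Real.rpow_add (by norm_num)]
    congr 1
    ring
  refine ne_top_of_le_ne_top ?_ (ENNReal.tsum_le_tsum hb)
  rw [ENNReal.tsum_mul_left, ENNReal.tsum_geometric]
  refine ENNReal.mul_ne_top (ENNReal.mul_ne_top (ENNReal.rpow_ne_top_of_nonneg hq hvt)
    ENNReal.ofReal_ne_top) ?_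
  rw [ENNReal.inv_ne_top]
  have : ENNReal.ofReal r < 1 := by rwa [ENNReal.ofReal_lt_one]
  exact (tsub_pos_of_lt this).ne'

lemma H2.tail (U : H2 N) {p : ℝ} (hp : 2 < p) (K : ℕ) :
    eLpNorm (fun x => U.u x - U.low K x) (ENNReal.ofReal p) volume ≤
      (∑' k, auxb N p (k + K)) * eLpNorm U.lapl 2 volume := by
  have hfin : ∀ n, eLpNorm (fun x => U.low (n + K) x - U.low K x) (ENNReal.ofReal p) volume ≤
      (∑ k ∈ Finset.range n, auxb N p (k + K)) * eLpNorm U.lapl 2 volume := by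
    intro n
    induction n with
    | zero => simp
    | succ n ih =>
      have e : (fun x => U.low (n + 1 + K) x - U.low K x) =
          (fun x => U.low (n + K) x - U.low K x) + auxP (auxS N (n+K)) (𝓕 U.U2 : L2E N) := by
        funext x
        rw [Pi.add_apply, ← H2.low_succ, add_right_comm]
        ring
      rw [e, Finset.sum_range_succ, add_mul]
      refine (eLpNorm_add_le ((U.low_cont _).sub (U.low_cont _)).aestronglyMeasurable
        (auxP_cont (auxS_meas _) (auxS_fin _) (Lp.memLp _)).aestronglyMeasurable ?_).trans
        (add_le_add ih ?_)
      · rw [← ENNReal.ofReal_one]; exact ENNReal.ofReal_le_ofReal (by linarith)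
      · refine (auxP_Lp (auxS_meas _) (auxS_fin _) (Lp.memLp _) hp).trans ?_
        unfold auxb
        rw [mul_assoc]
        exact mul_le_mul_right (U.high_le _ fun ξ h => h.2) _
  refine eLpNorm_le_of_tendstoInMeasure (u := atTop)
    (f := fun n x => U.low (n + K) x - U.low K x) (.of_forall fun n => (hfin n).trans ?_) ?_
    (fun n => ((U.low_cont _).sub (U.low_cont _)).aestronglyMeasurable)
  · exact mul_le_mul_left (ENNReal.sum_le_tsum _) _
  · refine tendstoInMeasure_of_tendsto_eLpNorm (p := 2) (by norm_num)
      (fun n => ((U.low_cont _).sub (U.low_cont _)).aestronglyMeasurable)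
      (U.u_mem.aestronglyMeasurable.sub (U.low_cont _).aestronglyMeasurable) ?_
    have hb : ∀ n, eLpNorm ((fun x => U.low (n + K) x - U.low K x) - fun x => U.u x - U.low K x) 2 volume
        ≤ ENNReal.ofReal ((1/4) ^ (n + K)) * eLpNorm U.lapl 2 volume := by
      intro n
      refine le_trans (le_of_eq ?_) (U.tail2 (n + K))
      rw [← eLpNorm_neg]
      congr 1
      funext x
      simp
    refine tendsto_of_tendsto_of_tendsto_of_le_of_le tendsto_const_nhds ?_ (fun _ => bot_le) hb
    have h0 : Tendsto (fun n : ℕ => ENNReal.ofReal (((1:ℝ)/4) ^ (n + K))) atTop (𝓝 0) := by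
      rw [← ENNReal.ofReal_zero]
      refine ENNReal.tendsto_ofReal ?_
      exact (tendsto_pow_atTop_nhds_zero_of_lt_one (by norm_num) (by norm_num)).comp
        (tendsto_add_atTop_nat K)
    have := ENNReal.Tendsto.mul_const (b := eLpNorm U.lapl 2 volume) h0
      (Or.inr U.lapl_mem.eLpNorm_ne_top)
    simpa using this

lemma H2.low_L2 (U : H2 N) (K : ℕ) :
    eLpNorm (U.low K) 2 volume ≤ eLpNorm U.u 2 volume := by
  unfold H2.low
  rw [auxP_L2 (auxB_meas _) (auxB_fin _) (Lp.memLp _)]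
  refine (eLpNorm_indicator_le _).trans (le_of_eq ?_)
  rw [← Lp.enorm_def, ← ofReal_norm, Lp.norm_fourier_eq, ofReal_norm, Lp.enorm_def]
  exact eLpNorm_congr_ae (MemLp.coeFn_toLp _)

lemma H2.low_sup (U : H2 N) (K : ℕ) (x : Esp N) :
    ‖U.low K x‖ₑ ≤ (volume (auxB N K)) ^ (1 / 2 : ℝ) * eLpNorm U.u 2 volume := by
  refine (auxP_sup (auxB_meas _) (Lp.memLp _) x).trans (mul_le_mul_right ?_ _)
  refine (eLpNorm_indicator_le _).trans (le_of_eq ?_)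
  rw [← Lp.enorm_def, ← ofReal_norm, Lp.norm_fourier_eq, ofReal_norm, Lp.enorm_def]
  exact eLpNorm_congr_ae (MemLp.coeFn_toLp _)

end tail

section ker
variable {N : ℕ}

def auxh (K : ℕ) (x : Esp N) : Esp N → ℂ :=
  (auxB N K).indicator (fun ξ => ((Real.fourierChar (-(inner ℝ ξ x)) : Circle) : ℂ))

lemma auxh_mem (K : ℕ) (x : Esp N) (q : ℝ≥0∞) : MemLp (auxh K x) q volume := by
  refine (memLp_indicator_const q (auxB_meas K) (1:ℂ) (Or.inr (auxB_fin K))).of_le ?_ ?_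
  · refine AEStronglyMeasurable.indicator ?_ (auxB_meas K)
    apply Continuous.aestronglyMeasurable
    exact continuous_subtype_val.comp (Real.continuous_fourierChar.comp (by fun_prop))
  · filter_upwards with ξ
    unfold auxh
    by_cases h : ξ ∈ auxB N K
    · rw [Set.indicator_of_mem h, Set.indicator_of_mem h, Circle.norm_coe, norm_one]
    · simp [Set.indicator_of_notMem h]

/-- the representing vector -/
def auxk (K : ℕ) (x : Esp N) : L2E N := 𝓕⁻ ((auxh_mem K x 2).toLp _ : L2E N)

lemma H2.low_inner (U : H2 N) (K : ℕ) (x : Esp N) :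
    U.low K x = inner ℂ (auxk K x) U.U2 := by
  unfold auxk
  rw [← Lp.inner_fourier_eq, FourierTransform.fourier_fourierInv_eq, L2.inner_def]
  unfold H2.low auxP
  rw [Real.fourierInv_eq]
  refine integral_congr_ae ?_
  filter_upwards [(auxh_mem K x 2).coeFn_toLp] with ξ hξ
  rw [hξ]
  unfold auxh
  by_cases h : ξ ∈ auxB N K
  · rw [Set.indicator_of_mem h, Set.indicator_of_mem h]
    simp [Circle.smul_def, mul_comm, ← Circle.coe_inv_eq_conj, AddChar.map_neg_eq_inv]
  · rw [Set.indicator_of_notMem h, Set.indicator_of_notMem h]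
    simp

/-- the kernel -/
def auxker (N K : ℕ) : Esp N → ℂ := 𝓕⁻ (auxh (N := N) K 0)

lemma auxk_ae (K : ℕ) (x : Esp N) : auxk K x =ᵐ[volume] fun y => auxker N K (y - x) := by
  refine (aux_L1L2 (memLp_one_iff_integrable.1 (auxh_mem K x 1)) (auxh_mem K x 2)).trans ?_
  filter_upwards with y
  unfold auxker
  rw [Real.fourierInv_eq, Real.fourierInv_eq]
  congr 1
  funext ξ
  unfold auxh
  by_cases h : ξ ∈ auxB N K
  · rw [Set.indicator_of_mem h, Set.indicator_of_mem h]
    rw [inner_sub_right, sub_eq_add_neg, AddChar.map_add_eq_mul]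
    simp [Circle.smul_def]
  · rw [Set.indicator_of_notMem h, Set.indicator_of_notMem h]
    simp

lemma H2.low_ker (U : H2 N) (K : ℕ) (x : Esp N) :
    U.low K x = ∫ y, (starRingEnd ℂ) (auxker N K y) * U.u (y + x) := by
  rw [U.low_inner, L2.inner_def,
    ← integral_sub_right_eq_self (fun y => (starRingEnd ℂ) (auxker N K y) * U.u (y + x)) x]
  refine integral_congr_ae ?_
  filter_upwards [auxk_ae K x, U.u_mem.coeFn_toLp] with y h1 h2
  have h3 : (U.U2 : L2E N) y = U.u y := h2
  rw [h1, h3]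
  simp [mul_comm]

end ker

section ops
variable {N : ℕ}

lemma TestFun.pd {φ : Esp N → ℂ} (h : TestFun φ) (i : Fin N) : TestFun (pderivC i φ) :=
  ⟨aux_pderiv_smooth i h.1, aux_pderiv_cpt i h.2⟩

lemma TestFun.mem {φ : Esp N → ℂ} (h : TestFun φ) (q : ℝ≥0∞) : MemLp φ q volume :=
  h.1.continuous.memLp_of_hasCompactSupport h.2

lemma TestFun.lap_mem {φ : Esp N → ℂ} (h : TestFun φ) (q : ℝ≥0∞) : MemLp (lapC φ) q volume :=
  memLp_finsetSum _ fun i _ => ((h.pd i).pd i).mem q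

lemma TestFun.lap {φ : Esp N → ℂ} (h : TestFun φ) : TestFun (lapC φ) := by
  refine ⟨ContDiff.sum fun i _ => ((h.pd i).pd i).1, ?_⟩
  refine HasCompactSupport.of_support_subset_isCompact (K := tsupport φ) h.2 ?_
  intro x hx
  by_contra hn
  apply hx
  have : φ =ᶠ[𝓝 x] fun _ => 0 := notMem_tsupport_iff_eventuallyEq.1 hn
  have h2 := aux_lap_congr this
  rw [h2]
  have h0 : ∀ i : Fin N, pderivC i (fun _ : Esp N => (0:ℂ)) = fun _ => 0 := by
    intro i; funext y; simp [pderivC]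
  simp [lapC, h0]

lemma aux_int2 {u φ : Esp N → ℂ} (hu : MemLp u 2 volume) (hφ : MemLp φ 2 volume) :
    Integrable (fun x => u x * φ x) volume := hu.integrable_mul hφ

def H2.sub (U V : H2 N) : H2 N where
  u := fun x => U.u x - V.u x
  grad := fun i x => U.grad i x - V.grad i x
  lapl := fun x => U.lapl x - V.lapl x
  u_mem := U.u_mem.sub V.u_mem
  grad_mem := fun i => (U.grad_mem i).sub (V.grad_mem i)
  lapl_mem := U.lapl_mem.sub V.lapl_mem
  grad_spec := fun i φ hφ => by
    simp only [sub_mul]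
    rw [integral_sub (aux_int2 U.u_mem ((hφ.pd i).mem 2)) (aux_int2 V.u_mem ((hφ.pd i).mem 2)),
      integral_sub (aux_int2 (U.grad_mem i) (hφ.mem 2)) (aux_int2 (V.grad_mem i) (hφ.mem 2)),
      U.grad_spec i φ hφ, V.grad_spec i φ hφ]
    ring
  lapl_spec := fun φ hφ => by
    simp only [sub_mul]
    rw [integral_sub (aux_int2 U.u_mem (hφ.lap_mem 2)) (aux_int2 V.u_mem (hφ.lap_mem 2)),
      integral_sub (aux_int2 U.lapl_mem (hφ.mem 2)) (aux_int2 V.lapl_mem (hφ.mem 2)),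
      U.lapl_spec φ hφ, V.lapl_spec φ hφ]

def H2.smul (a : ℂ) (U : H2 N) : H2 N where
  u := fun x => a * U.u x
  grad := fun i x => a * U.grad i x
  lapl := fun x => a * U.lapl x
  u_mem := U.u_mem.const_mul a
  grad_mem := fun i => (U.grad_mem i).const_mul a
  lapl_mem := U.lapl_mem.const_mul a
  grad_spec := fun i φ hφ => by
    simp only [mul_assoc]
    rw [integral_const_mul, integral_const_mul, U.grad_spec i φ hφ, mul_neg]
  lapl_spec := fun φ hφ => by
    simp only [mul_assoc]
    rw [integral_const_mul, integral_const_mul, U.lapl_spec φ hφ]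

lemma aux_pderiv_shift (i : Fin N) (φ : Esp N → ℂ) (y : Esp N) :
    pderivC i (fun x => φ (x - y)) = fun x => pderivC i φ (x - y) := by
  funext x
  unfold pderivC
  rw [fderiv_comp_sub]

lemma aux_test_shift {φ : Esp N → ℂ} (h : TestFun φ) (y : Esp N) :
    TestFun (fun x => φ (x - y)) := by
  refine ⟨h.1.comp (contDiff_id.sub contDiff_const), ?_⟩
  exact h.2.comp_homeomorph (Homeomorph.subRight y)

lemma aux_mem_shift {f : Esp N → ℂ} {q : ℝ≥0∞} (h : MemLp f q volume) (y : Esp N) :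
    MemLp (fun x => f (x + y)) q volume :=
  h.comp_measurePreserving (measurePreserving_add_right volume y)

lemma aux_eLp_shift {f : Esp N → ℂ} {q : ℝ≥0∞} (h : AEStronglyMeasurable f volume) (y : Esp N) :
    eLpNorm (fun x => f (x + y)) q volume = eLpNorm f q volume :=
  eLpNorm_comp_measurePreserving h (measurePreserving_add_right volume y)

def H2.tr (U : H2 N) (y : Esp N) : H2 N where
  u := fun x => U.u (x + y)
  grad := fun i x => U.grad i (x + y)
  lapl := fun x => U.lapl (x + y)
  u_mem := aux_mem_shift U.u_mem y
  grad_mem := fun i => aux_mem_shift (U.grad_mem i) y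
  lapl_mem := aux_mem_shift U.lapl_mem y
  grad_spec := fun i φ hφ => by
    have h := U.grad_spec i _ (aux_test_shift hφ y)
    rw [← integral_add_right_eq_self _ y, ← integral_add_right_eq_self (fun x => U.grad i x * _) y,
      aux_pderiv_shift] at h
    simpa using h
  lapl_spec := fun φ hφ => by
    have h := U.lapl_spec _ (aux_test_shift hφ y)
    rw [← integral_add_right_eq_self _ y, ← integral_add_right_eq_self (fun x => U.lapl x * _) y] at h
    unfold lapC at h ⊢
    simpa [aux_pderiv_shift] using h

lemma H2.tr_low (U : H2 N) (y : Esp N) (K : ℕ) (x : Esp N) :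
    (U.tr y).low K x = U.low K (x + y) := by
  rw [H2.low_ker, H2.low_ker]
  simp [H2.tr, add_assoc]

lemma H2.tr_Tfun (U : H2 N) (y : Esp N) (c : ℝ) : Tfun c (U.tr y) = Tfun c U := by
  unfold Tfun H2.lapSq H2.gradSq H2.massSq H2.tr
  simp only
  rw [integral_add_right_eq_self (fun x => ‖U.lapl x‖ ^ 2) y,
    integral_add_right_eq_self (fun x => ‖U.u x‖ ^ 2) y]
  congr 3
  refine Finset.sum_congr rfl fun i _ => ?_
  rw [integral_add_right_eq_self (fun x => ‖U.grad i x‖ ^ 2) y]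

lemma H2.tr_pPow (U : H2 N) (y : Esp N) (σ : ℝ) : (U.tr y).pPow σ = U.pPow σ := by
  unfold H2.pPow H2.tr
  simp only
  rw [integral_add_right_eq_self (fun x => ‖U.u x‖ ^ (2 * σ + 2)) y]

lemma H2.sub_U2 (U V : H2 N) : (U.sub V).U2 = U.U2 - V.U2 := rfl
lemma H2.sub_W2 (U V : H2 N) : (U.sub V).W2 = U.W2 - V.W2 := rfl
lemma H2.sub_G2 (U V : H2 N) (i : Fin N) : (U.sub V).G2 i = U.G2 i - V.G2 i := rfl

lemma H2.sub_low (U V : H2 N) (K : ℕ) (x : Esp N) :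
    (U.sub V).low K x = U.low K x - V.low K x := by
  rw [H2.low_inner, H2.low_inner, H2.low_inner, H2.sub_U2, inner_sub_right]

lemma H2.smul_Tfun (a : ℂ) (U : H2 N) (c : ℝ) : Tfun c (H2.smul a U) = ‖a‖ ^ 2 * Tfun c U := by
  unfold Tfun H2.lapSq H2.gradSq H2.massSq H2.smul
  simp only [norm_mul, mul_pow, integral_const_mul, ← Finset.mul_sum]
  ring

lemma H2.smul_pPow (a : ℂ) (U : H2 N) (σ : ℝ) :
    (H2.smul a U).pPow σ = ‖a‖ ^ (2 * σ + 2) * U.pPow σ := by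
  unfold H2.pPow H2.smul
  simp only [norm_mul, Real.mul_rpow (norm_nonneg _) (norm_nonneg _), integral_const_mul]

/-- test functions are in H2 -/
def H2.ofTest (φ : Esp N → ℂ) (h : TestFun φ) : H2 N where
  u := φ
  grad := fun i => pderivC i φ
  lapl := lapC φ
  u_mem := h.mem 2
  grad_mem := fun i => (h.pd i).mem 2
  lapl_mem := h.lap_mem 2
  grad_spec := fun i ψ hψ => by
    unfold pderivC
    have := integral_mul_fderiv_eq_neg_fderiv_mul_of_integrable (μ := (volume : Measure (Esp N)))
      (f := φ) (g := ψ) (v := EuclideanSpace.single i (1:ℝ))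
      (aux_int2 ((h.pd i).mem 2) (hψ.mem 2)) (aux_int2 (h.mem 2) ((hψ.pd i).mem 2))
      (aux_int2 (h.mem 2) (hψ.mem 2)) (fun x _ => aux_smooth_diff h.1 x) (fun x _ => aux_smooth_diff hψ.1 x)
    exact this
  lapl_spec := fun ψ hψ => by
    have ibp : ∀ (i : Fin N) {f g : Esp N → ℂ}, TestFun f → TestFun g →
        ∫ x, f x * pderivC i g x = - ∫ x, pderivC i f x * g x := by
      intro i f g hf hg
      unfold pderivC
      exact integral_mul_fderiv_eq_neg_fderiv_mul_of_integrable (μ := (volume : Measure (Esp N)))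
        (f := f) (g := g) (v := EuclideanSpace.single i (1:ℝ))
        (aux_int2 ((hf.pd i).mem 2) (hg.mem 2)) (aux_int2 (hf.mem 2) ((hg.pd i).mem 2))
        (aux_int2 (hf.mem 2) (hg.mem 2)) (fun x _ => aux_smooth_diff hf.1 x) (fun x _ => aux_smooth_diff hg.1 x)
    unfold lapC
    simp only [Finset.mul_sum, Finset.sum_mul]
    rw [integral_finsetSum _ fun i _ => aux_int2 (h.mem 2) (((hψ.pd i).pd i).mem 2),
      integral_finsetSum _ fun i _ => aux_int2 (((h.pd i).pd i).mem 2) (hψ.mem 2)]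
    refine Finset.sum_congr rfl fun i _ => ?_
    rw [ibp i h (hψ.pd i), ibp i (h.pd i) hψ, neg_neg]

end ops

section emb
variable {N : ℕ}

lemma H2.low_Lp (U : H2 N) {p : ℝ} (hp : 2 < p) (K : ℕ) :
    eLpNorm (U.low K) (ENNReal.ofReal p) volume ≤
      (volume (auxB N K)) ^ (1 / 2 * (1 - 2 / p)) * eLpNorm U.u 2 volume := by
  refine (auxP_Lp (auxB_meas _) (auxB_fin _) (Lp.memLp _) hp).trans (mul_le_mul_right ?_ _)
  refine (eLpNorm_indicator_le _).trans (le_of_eq ?_)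
  rw [← Lp.enorm_def, ← ofReal_norm, Lp.norm_fourier_eq, ofReal_norm, Lp.enorm_def]
  exact eLpNorm_congr_ae (MemLp.coeFn_toLp _)

lemma H2.emb {p : ℝ} (hp : 2 < p) (hsub : (N : ℝ) * (1 / 2 - 1 / p) < 2) :
    ∃ C : ℝ≥0∞, C ≠ ∞ ∧ ∀ U : H2 N, eLpNorm U.u (ENNReal.ofReal p) volume ≤
      C * (eLpNorm U.u 2 volume + eLpNorm U.lapl 2 volume) := by
  have hq : 0 ≤ 1 / 2 * (1 - 2 / p) := by
    have : 2 / p ≤ 1 := by rw [div_le_one (by linarith)]; exact hp.le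
    linarith
  refine ⟨(volume (auxB N 0)) ^ (1 / 2 * (1 - 2 / p)) + ∑' k, auxb N p k,
    ENNReal.add_ne_top.2 ⟨ENNReal.rpow_ne_top_of_nonneg hq (auxB_fin 0), auxb_sum hp hsub⟩, ?_⟩
  intro U
  have e : U.u = U.low 0 + (fun x => U.u x - U.low 0 x) := by
    funext x; simp
  have h1 : 1 ≤ ENNReal.ofReal p := by
    rw [← ENNReal.ofReal_one]; exact ENNReal.ofReal_le_ofReal (by linarith)
  calc eLpNorm U.u (ENNReal.ofReal p) volume
      = eLpNorm (U.low 0 + (fun x => U.u x - U.low 0 x)) (ENNReal.ofReal p) volume := by rw [← e]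
    _ ≤ _ := eLpNorm_add_le (U.low_cont 0).aestronglyMeasurable
        (U.u_mem.aestronglyMeasurable.sub (U.low_cont _).aestronglyMeasurable) h1
    _ ≤ _ := add_le_add (U.low_Lp hp 0) (U.tail hp 0)
    _ ≤ _ := by
      rw [add_mul, mul_add, mul_add]
      exact add_le_add le_self_add le_add_self

lemma H2.memLp {p : ℝ} (hp : 2 < p) (hsub : (N : ℝ) * (1 / 2 - 1 / p) < 2) (U : H2 N) :
    MemLp U.u (ENNReal.ofReal p) volume := by
  obtain ⟨C, hC, h⟩ := H2.emb hp hsub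
  exact ⟨U.u_mem.aestronglyMeasurable, (h U).trans_lt (ENNReal.mul_lt_top hC.lt_top
    (ENNReal.add_lt_top.2 ⟨U.u_mem.eLpNorm_lt_top, U.lapl_mem.eLpNorm_lt_top⟩))⟩

lemma H2.norm_U2 (U : H2 N) : (eLpNorm U.u 2 volume).toReal = ‖U.U2‖ := by
  unfold H2.U2; rw [Lp.norm_toLp]
lemma H2.norm_W2 (U : H2 N) : (eLpNorm U.lapl 2 volume).toReal = ‖U.W2‖ := by
  unfold H2.W2; rw [Lp.norm_toLp]
lemma H2.norm_G2 (U : H2 N) (i : Fin N) : (eLpNorm (U.grad i) 2 volume).toReal = ‖U.G2 i‖ := by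
  unfold H2.G2; rw [Lp.norm_toLp]

lemma H2.pPow_eq {σ : ℝ} (hs : 0 < σ) (hsub : (N : ℝ) * (1 / 2 - 1 / (2 * σ + 2)) < 2) (U : H2 N) :
    eLpNorm U.u (ENNReal.ofReal (2 * σ + 2)) volume =
      ENNReal.ofReal (U.pPow σ ^ (2 * σ + 2)⁻¹) := by
  have := (U.memLp (by linarith) hsub).eLpNorm_eq_integral_rpow_norm (by simp; linarith) (by simp)
  rw [ENNReal.toReal_ofReal (by linarith)] at this
  exact this

lemma H2.pPow_nonneg (σ : ℝ) (U : H2 N) : 0 ≤ U.pPow σ :=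
  integral_nonneg fun x => by positivity

lemma H2.pPow_le {σ c : ℝ} (hs : 0 < σ) (hsub : (N : ℝ) * (1 / 2 - 1 / (2 * σ + 2)) < 2)
    (hc : 0 < c) : ∃ C : ℝ, 0 < C ∧ ∀ U : H2 N, (U.pPow σ ^ (2 * σ + 2)⁻¹) ^ 2 ≤ C * Tfun c U := by
  obtain ⟨C, hC, h⟩ := H2.emb (N := N) (p := 2 * σ + 2) (by linarith) hsub
  refine ⟨2 * C.toReal ^ 2 * (2 + 3 * c⁻¹) + 1, by positivity, fun U => ?_⟩
  have h1 : U.pPow σ ^ (2 * σ + 2)⁻¹ ≤ C.toReal * (‖U.U2‖ + ‖U.W2‖) := by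
    have h2 := h U
    rw [U.pPow_eq hs hsub] at h2
    have h3 := ENNReal.toReal_mono (ENNReal.mul_ne_top hC
      (ENNReal.add_ne_top.2 ⟨U.u_mem.eLpNorm_ne_top, U.lapl_mem.eLpNorm_ne_top⟩)) h2
    rwa [ENNReal.toReal_ofReal (Real.rpow_nonneg (U.pPow_nonneg σ) _), ENNReal.toReal_mul,
      ENNReal.toReal_add U.u_mem.eLpNorm_ne_top U.lapl_mem.eLpNorm_ne_top, U.norm_U2,
      U.norm_W2] at h3
  have h0 : 0 ≤ U.pPow σ ^ (2 * σ + 2)⁻¹ := Real.rpow_nonneg (U.pPow_nonneg σ) _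
  have h4 := pow_le_pow_left₀ h0 h1 2
  have hT := U.Tfun_nonneg hc
  have h5 : (‖U.U2‖ + ‖U.W2‖) ^ 2 ≤ 2 * ((2 + 3 * c⁻¹) * Tfun c U) := by
    nlinarith [U.mass_le hc, U.lap_le hc, sq_nonneg (‖U.U2‖ - ‖U.W2‖)]
  calc _ ≤ _ := h4
    _ = C.toReal ^ 2 * (‖U.U2‖ + ‖U.W2‖) ^ 2 := by ring
    _ ≤ C.toReal ^ 2 * (2 * ((2 + 3 * c⁻¹) * Tfun c U)) := by gcongr
    _ ≤ _ := by nlinarith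

def auxSet (N : ℕ) (σ c : ℝ) : Set ℝ := {r : ℝ | ∃ U : H2 N, U.pPow σ = 1 ∧ r = Tfun c U}

lemma aux_bddBelow {σ c : ℝ} (hc : 0 < c) : BddBelow (auxSet N σ c) :=
  ⟨0, fun _ ⟨U, _, h⟩ => h ▸ U.Tfun_nonneg hc⟩

lemma H2.exists_unit {σ : ℝ} (hs : 0 < σ) (U : H2 N) (h : 0 < U.pPow σ) :
    (H2.smul ((U.pPow σ ^ (-(2 * σ + 2)⁻¹) : ℝ) : ℂ) U).pPow σ = 1 := by
  rw [H2.smul_pPow, Complex.norm_real, Real.norm_of_nonneg (by positivity), ← Real.rpow_mul h.le]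
  have : -(2 * σ + 2)⁻¹ * (2 * σ + 2) = -1 := by
    have : 2 * σ + 2 ≠ 0 := by linarith
    field_simp
  rw [this, Real.rpow_neg_one, inv_mul_cancel₀ h.ne']

lemma aux_nonempty {σ c : ℝ} (hs : 0 < σ) (hsub : (N : ℝ) * (1 / 2 - 1 / (2 * σ + 2)) < 2) :
    (auxSet N σ c).Nonempty := by
  let U : H2 N := H2.ofTest (auxBump N) ⟨auxBump_smooth, auxBump_cpt⟩
  have h : 0 < U.pPow σ := by
    refine lt_of_le_of_ne (U.pPow_nonneg σ) fun h0 => ?_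
    have h1 := U.pPow_eq hs hsub
    rw [← h0, Real.zero_rpow (by simp; linarith), ENNReal.ofReal_zero,
      eLpNorm_eq_zero_iff U.u_mem.aestronglyMeasurable (by simp; linarith)] at h1
    have h2 : volume (Metric.ball (0 : Esp N) 1) = 0 := by
      refine measure_mono_null ?_ h1
      intro x hx hx2
      have h3 : auxBump N x = 0 := hx2
      rw [auxBump_one (by simpa using (Metric.mem_ball.1 hx).le)] at h3
      exact one_ne_zero h3
    exact (Metric.measure_ball_pos volume (0 : Esp N) one_pos).ne' h2
  exact ⟨_, _, U.exists_unit hs h, rfl⟩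

lemma aux_tmin_pos {σ c : ℝ} (hs : 0 < σ) (hsub : (N : ℝ) * (1 / 2 - 1 / (2 * σ + 2)) < 2)
    (hc : 0 < c) : 0 < tmin N σ c := by
  obtain ⟨C, hC, h⟩ := H2.pPow_le (N := N) hs hsub hc
  refine lt_of_lt_of_le (inv_pos.2 hC) (le_csInf (aux_nonempty hs hsub) ?_)
  rintro r ⟨U, h1, rfl⟩
  have := h U
  rw [h1, Real.one_rpow, one_pow] at this
  rw [inv_le_iff_one_le_mul₀' hC]; exact this

lemma H2.tmin_le {σ c : ℝ} (hs : 0 < σ) (hsub : (N : ℝ) * (1 / 2 - 1 / (2 * σ + 2)) < 2)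
    (hc : 0 < c) (U : H2 N) : tmin N σ c * U.pPow σ ^ (2 / (2 * σ + 2)) ≤ Tfun c U := by
  rcases (U.pPow_nonneg σ).eq_or_lt with h | h
  · rw [← h, Real.zero_rpow (by positivity), mul_zero]; exact U.Tfun_nonneg hc
  · have h1 : tmin N σ c ≤ _ := csInf_le (aux_bddBelow hc) ⟨_, U.exists_unit hs h, rfl⟩
    rw [H2.smul_Tfun, Complex.norm_real, Real.norm_of_nonneg (by positivity),
      ← Real.rpow_natCast, ← Real.rpow_mul h.le] at h1
    have : -(2 * σ + 2)⁻¹ * ((2:ℕ) : ℝ) = - (2 / (2 * σ + 2)) := by push_cast; ring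
    rw [this, Real.rpow_neg h.le, le_inv_mul_iff₀ (by positivity)] at h1
    linarith

end emb

section wk
variable {N : ℕ}

def WConv (f : ℕ → L2E N) (g : L2E N) : Prop :=
  ∀ h : L2E N, Tendsto (fun n => (inner ℂ h (f n) : ℂ)) atTop (𝓝 (inner ℂ h g))

lemma WConv.comp {f : ℕ → L2E N} {g : L2E N} (h : WConv f g) {φ : ℕ → ℕ} (hφ : StrictMono φ) :
    WConv (fun n => f (φ n)) g := fun k => (h k).comp hφ.tendsto_atTop

lemma aux_wconv_one (f : ℕ → L2E N) (R : ℝ) (hR : ∀ n, ‖f n‖ ≤ R) :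
    ∃ φ : ℕ → ℕ, StrictMono φ ∧ ∃ g, WConv (fun n => f (φ n)) g := by
  have : Fact ((2:ℝ≥0∞) ≠ ∞) := ⟨by norm_num⟩
  have key := WeakDual.isSeqCompact_closedBall ℂ (L2E N) 0 R
  obtain ⟨a, _, φ, hφ, ha⟩ := key
    (x := fun n => StrongDual.toWeakDual (InnerProductSpace.toDual ℂ (L2E N) (f n))) (fun n => by
      have h1 : ‖InnerProductSpace.toDual ℂ (L2E N) (f n)‖ ≤ R := by
        rw [LinearIsometryEquiv.norm_map]; exact hR n
      simpa using h1)
  refine ⟨φ, hφ, (InnerProductSpace.toDual ℂ (L2E N)).symm (WeakDual.toStrongDual a), fun h => ?_⟩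
  have h1 := (tendsto_iff_forall_eval_tendsto_topDualPairing.1 ha) h
  have h2 : Tendsto (fun n => (inner ℂ (f (φ n)) h : ℂ)) atTop
      (𝓝 (inner ℂ ((InnerProductSpace.toDual ℂ (L2E N)).symm (WeakDual.toStrongDual a)) h)) := by
    rw [InnerProductSpace.toDual_symm_apply]
    exact h1
  have h3 := (Complex.continuous_conj.tendsto _).comp h2
  rw [inner_conj_symm] at h3
  refine h3.congr fun n => ?_
  exact inner_conj_symm _ _

lemma aux_wconv_fin {ι : Type} (s : Finset ι) (f : ι → ℕ → L2E N) (R : ι → ℝ)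
    (hR : ∀ i n, ‖f i n‖ ≤ R i) :
    ∃ φ : ℕ → ℕ, StrictMono φ ∧ ∀ i ∈ s, ∃ g, WConv (fun n => f i (φ n)) g := by
  classical
  induction s using Finset.induction_on with
  | empty => exact ⟨id, strictMono_id, by simp⟩
  | insert a s ha ih =>
    obtain ⟨φ, hφ, h⟩ := ih
    obtain ⟨ψ, hψ, g, hg⟩ := aux_wconv_one (fun n => f a (φ n)) (R a) (fun n => hR a _)
    refine ⟨φ ∘ ψ, hφ.comp hψ, fun i hi => ?_⟩
    rcases Finset.mem_insert.1 hi with rfl | hi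
    · exact ⟨g, hg⟩
    · obtain ⟨g', hg'⟩ := h i hi
      exact ⟨g', hg'.comp hψ⟩

lemma aux_conj_mem {ψ : Esp N → ℂ} (h : MemLp ψ 2 volume) :
    MemLp (fun x => (starRingEnd ℂ) (ψ x)) 2 volume := h.star

lemma aux_pair_inner {ψ : Esp N → ℂ} (h : MemLp ψ 2 volume) (f : L2E N) :
    ∫ x, f x * ψ x = inner ℂ ((aux_conj_mem h).toLp _ : L2E N) f := by
  rw [L2.inner_def]
  refine integral_congr_ae ?_
  filter_upwards [(aux_conj_mem h).coeFn_toLp] with x hx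
  rw [hx]
  simp

lemma aux_wlim {f : ℕ → L2E N} {g : L2E N} (hf : WConv f g) {ψ : Esp N → ℂ}
    (h : MemLp ψ 2 volume) :
    Tendsto (fun n => ∫ x, f n x * ψ x) atTop (𝓝 (∫ x, g x * ψ x)) := by
  simp only [aux_pair_inner h]
  exact hf _

lemma aux_toLp_int {f : Esp N → ℂ} (hf : MemLp f 2 volume) (ψ : Esp N → ℂ) :
    ∫ x, (hf.toLp f : L2E N) x * ψ x = ∫ x, f x * ψ x := by
  refine integral_congr_ae ?_
  filter_upwards [hf.coeFn_toLp] with x hx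
  rw [hx]

lemma H2.weak (v : ℕ → H2 N) (R : ℝ) (hU : ∀ n, ‖(v n).U2‖ ≤ R) (hW : ∀ n, ‖(v n).W2‖ ≤ R)
    (hG : ∀ n i, ‖(v n).G2 i‖ ≤ R) :
    ∃ φ : ℕ → ℕ, StrictMono φ ∧ ∃ V : H2 N, WConv (fun n => (v (φ n)).U2) V.U2 ∧
      WConv (fun n => (v (φ n)).W2) V.W2 := by
  obtain ⟨φ, hφ, h⟩ := aux_wconv_fin (Finset.univ : Finset (Option (Option (Fin N))))
    (fun i n => match i with
      | none => (v n).U2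
      | some none => (v n).W2
      | some (some i) => (v n).G2 i) (fun _ => R) (by
        rintro (_ | _ | i) n
        · exact hU n
        · exact hW n
        · exact hG n i)
  obtain ⟨u, hu⟩ := h none (Finset.mem_univ _)
  obtain ⟨w, hw⟩ := h (some none) (Finset.mem_univ _)
  have hg : ∀ i, ∃ g, WConv (fun n => (v (φ n)).G2 i) g := fun i =>
    h (some (some i)) (Finset.mem_univ _)
  choose g hg using hg
  refine ⟨φ, hφ, ⟨u, fun i => g i, w, Lp.memLp u, fun i => Lp.memLp (g i), Lp.memLp w, ?_, ?_⟩,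
    ?_, ?_⟩
  · intro i ψ hψ
    have h1 := aux_wlim hu ((hψ.pd i).mem 2)
    have h2 := (aux_wlim (hg i) (hψ.mem 2)).neg
    refine tendsto_nhds_unique h1 (h2.congr fun n => ?_)
    unfold H2.G2 H2.U2
    rw [aux_toLp_int, aux_toLp_int, (v (φ n)).grad_spec i ψ hψ]
  · intro ψ hψ
    have h1 := aux_wlim hu (hψ.lap_mem 2)
    have h2 := (aux_wlim hw (hψ.mem 2))
    refine tendsto_nhds_unique h1 (h2.congr fun n => ?_)
    unfold H2.W2 H2.U2
    rw [aux_toLp_int, aux_toLp_int, (v (φ n)).lapl_spec ψ hψ]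
  · change WConv _ ((Lp.memLp u).toLp _)
    rw [Lp.toLp_coeFn]; exact hu
  · change WConv _ ((Lp.memLp w).toLp _)
    rw [Lp.toLp_coeFn]; exact hw

/-- expansion of the quadratic form along a weakly convergent sequence -/
lemma aux_wexp {f : ℕ → L2E N} {g : L2E N} (hf : WConv f g) :
    Tendsto (fun n => ‖f n‖ ^ 2 - ‖f n - g‖ ^ 2) atTop (𝓝 (‖g‖ ^ 2)) := by
  have h1 := (Complex.continuous_re.tendsto _).comp (hf g)
  have h2 : Tendsto (fun n => 2 * (inner ℂ g (f n) : ℂ).re - ‖g‖ ^ 2) atTop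
      (𝓝 (2 * (inner ℂ g g : ℂ).re - ‖g‖ ^ 2)) := (h1.const_mul 2).sub_const _
  have h3 : (inner ℂ g g : ℂ).re = ‖g‖ ^ 2 := (norm_sq_eq_re_inner (𝕜 := ℂ) g).symm
  rw [h3] at h2
  have e : 2 * ‖g‖ ^ 2 - ‖g‖ ^ 2 = ‖g‖ ^ 2 := by ring
  rw [e] at h2
  refine h2.congr fun n => ?_
  have h4 := norm_sub_sq (𝕜 := ℂ) (f n) g
  have h5 : RCLike.re (inner ℂ (f n) g : ℂ) = (inner ℂ g (f n) : ℂ).re := inner_re_symm (𝕜 := ℂ) _ _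
  rw [h4, h5]; ring

lemma H2.Texp {v : ℕ → H2 N} {V : H2 N} (hU : WConv (fun n => (v n).U2) V.U2)
    (hW : WConv (fun n => (v n).W2) V.W2) (c : ℝ) :
    Tendsto (fun n => Tfun c (v n) - Tfun c ((v n).sub V)) atTop (𝓝 (Tfun c V)) := by
  have hS : WConv (fun n => (v n).W2 + (v n).U2) (V.W2 + V.U2) := fun h => by
    simp only [inner_add_right]; exact (hW h).add (hU h)
  have := (aux_wexp hS).add ((aux_wexp hU).const_mul c)
  rw [H2.Tfun_eq]
  refine this.congr fun n => ?_
  rw [H2.Tfun_eq, H2.Tfun_eq, H2.sub_U2, H2.sub_W2]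
  have : (v n).W2 - V.W2 + ((v n).U2 - V.U2) = (v n).W2 + (v n).U2 - (V.W2 + V.U2) := by abel
  rw [this]; ring

end wk

section nv
variable {N : ℕ}

lemma H2.eu_le (U : H2 N) {R : ℝ} (h : ‖U.U2‖ ≤ R) : eLpNorm U.u 2 volume ≤ ENNReal.ofReal R := by
  rw [← U.norm_U2] at h
  rw [← ENNReal.ofReal_toReal U.u_mem.eLpNorm_ne_top]
  exact ENNReal.ofReal_le_ofReal h

lemma H2.ew_le (U : H2 N) {R : ℝ} (h : ‖U.W2‖ ≤ R) :
    eLpNorm U.lapl 2 volume ≤ ENNReal.ofReal R := by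
  rw [← U.norm_W2] at h
  rw [← ENNReal.ofReal_toReal U.lapl_mem.eLpNorm_ne_top]
  exact ENNReal.ofReal_le_ofReal h

lemma aux_nonvanish {σ : ℝ} (hs : 0 < σ) (hsub : (N : ℝ) * (1 / 2 - 1 / (2 * σ + 2)) < 2)
    (u : ℕ → H2 N) (R : ℝ) (hU : ∀ n, ‖(u n).U2‖ ≤ R) (hW : ∀ n, ‖(u n).W2‖ ≤ R)
    (h1 : Tendsto (fun n => (u n).pPow σ) atTop (𝓝 1)) :
    ∃ (K : ℕ) (δ : ℝ), 0 < δ ∧ ∀ᶠ n in atTop, ∃ x, δ ≤ ‖(u n).low K x‖ := by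
  set p := 2 * σ + 2 with hpd
  have hp : 2 < p := by linarith
  have hR : 0 ≤ R := (norm_nonneg _).trans (hU 0)
  have ht : Tendsto (fun K => (∑' k, auxb N p (k + K)) * ENNReal.ofReal R) atTop (𝓝 0) := by
    have := ENNReal.Tendsto.mul_const (b := ENNReal.ofReal R)
      (ENNReal.tendsto_sum_nat_add (auxb N p) (auxb_sum hp hsub)) (Or.inr ENNReal.ofReal_ne_top)
    simpa using this
  obtain ⟨K, hK⟩ := ((ENNReal.tendsto_nhds_zero.1 ht) (ENNReal.ofReal (1/4)) (by simp)).exists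
  have hq : 0 < 1 - 2 / p := by
    have : 2 / p < 1 := by rw [div_lt_one (by linarith)]; exact hp
    linarith
  set q := 1 - 2 / p with hqd
  set A := R ^ (2 / p) + 1 with hA
  have hA0 : 0 < A := by positivity
  set δ := (1 / 4 / A) ^ (q⁻¹) with hδ
  have hδ0 : 0 < δ := by positivity
  have hδq : δ ^ q * R ^ (2 / p) ≤ 1 / 4 := by
    rw [hδ, ← Real.rpow_mul (by positivity), inv_mul_cancel₀ hq.ne', Real.rpow_one,
      div_mul_eq_mul_div, div_le_iff₀ hA0]
    have : R ^ (2 / p) ≤ A := by linarith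
    linarith
  refine ⟨K, δ, hδ0, ?_⟩
  have h2 : Tendsto (fun n => (u n).pPow σ ^ p⁻¹) atTop (𝓝 1) := by
    have := h1.rpow_const (p := p⁻¹) (Or.inl one_ne_zero)
    simpa using this
  filter_upwards [h2.eventually (lt_mem_nhds (a := 3/4) (by norm_num))] with n hn
  by_contra! hcon
  have hsup : ∀ x, ‖(u n).low K x‖ₑ ≤ ENNReal.ofReal δ := fun x => by
    rw [← ofReal_norm]; exact ENNReal.ofReal_le_ofReal (hcon x).le
  have hlow : eLpNorm ((u n).low K) (ENNReal.ofReal p) volume ≤ ENNReal.ofReal (1/4) := by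
    refine (aux_interp hp ENNReal.ofReal_ne_top hsup).trans ?_
    have h3 : (eLpNorm ((u n).low K) 2 volume) ^ (2 / p) ≤ ENNReal.ofReal R ^ (2 / p) :=
      ENNReal.rpow_le_rpow (((u n).low_L2 K).trans ((u n).eu_le (hU n))) (by positivity)
    refine (mul_le_mul_right h3 _).trans ?_
    rw [ENNReal.ofReal_rpow_of_nonneg hδ0.le hq.le, ENNReal.ofReal_rpow_of_nonneg hR (by positivity),
      ← ENNReal.ofReal_mul (by positivity)]
    exact ENNReal.ofReal_le_ofReal hδq
  have htail : eLpNorm (fun x => (u n).u x - (u n).low K x) (ENNReal.ofReal p) volume ≤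
      ENNReal.ofReal (1/4) :=
    ((u n).tail hp K).trans ((mul_le_mul_right ((u n).ew_le (hW n)) _).trans hK)
  have e : (u n).u = (u n).low K + (fun x => (u n).u x - (u n).low K x) := by
    funext x; simp
  have hp1 : 1 ≤ ENNReal.ofReal p := by
    rw [← ENNReal.ofReal_one]; exact ENNReal.ofReal_le_ofReal (by linarith)
  have hfin : eLpNorm (u n).u (ENNReal.ofReal p) volume ≤ ENNReal.ofReal (1/2) := by
    calc _ = eLpNorm ((u n).low K + (fun x => (u n).u x - (u n).low K x)) (ENNReal.ofReal p) volume := by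
          rw [← e]
      _ ≤ _ := eLpNorm_add_le ((u n).low_cont K).aestronglyMeasurable
        ((u n).u_mem.aestronglyMeasurable.sub ((u n).low_cont _).aestronglyMeasurable) hp1
      _ ≤ _ := add_le_add hlow htail
      _ = _ := by rw [← ENNReal.ofReal_add (by norm_num) (by norm_num)]; norm_num
  rw [(u n).pPow_eq hs hsub, ENNReal.ofReal_le_ofReal_iff (by norm_num)] at hfin
  linarith

lemma aux_finmeas : ∃ ν : Measure (Esp N), IsFiniteMeasure ν ∧ ν ≤ volume ∧
    (volume : Measure (Esp N)) ≪ ν := by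
  obtain ⟨g, hg, hm, hi⟩ := exists_pos_lintegral_lt_of_sigmaFinite
    (volume : Measure (Esp N)) (ε := 1) one_ne_zero
  refine ⟨volume.withDensity (fun x => min (g x : ℝ≥0∞) 1), ?_, ?_, ?_⟩
  · refine isFiniteMeasure_withDensity ?_
    exact ((lintegral_mono fun x => min_le_left _ _).trans_lt (hi.trans ENNReal.one_lt_top)).ne
  · have h := withDensity_mono (μ := (volume : Measure (Esp N)))
      (f := fun x => min (g x : ℝ≥0∞) 1) (g := 1) (.of_forall fun x => min_le_right _ _)
    rwa [withDensity_one] at h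
  · refine withDensity_absolutelyContinuous' (by fun_prop) (.of_forall fun x => ?_)
    have : (0:ℝ≥0∞) < min (g x : ℝ≥0∞) 1 := lt_min (by exact_mod_cast hg x) one_pos
    exact this.ne'

lemma aux_ae_conv (D : ℕ → H2 N) (R : ℝ) (hU : ∀ n, ‖(D n).U2‖ ≤ R) (hW : ∀ n, ‖(D n).W2‖ ≤ R)
    (hD : WConv (fun n => (D n).U2) 0) :
    ∃ φ : ℕ → ℕ, StrictMono φ ∧ ∀ᵐ x, Tendsto (fun n => (D (φ n)).u x) atTop (𝓝 0) := by
  obtain ⟨ν, hν, hle, hac⟩ := aux_finmeas (N := N)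
  have hlow : ∀ K x, Tendsto (fun n => (D n).low K x) atTop (𝓝 0) := by
    intro K x
    have := hD (auxk K x)
    rw [inner_zero_right] at this
    exact this.congr fun n => ((D n).low_inner K x).symm
  have hlow2 : ∀ K, Tendsto (fun n => eLpNorm ((D n).low K) 2 ν) atTop (𝓝 0) := by
    intro K
    have h1 : Tendsto (fun n => ∫⁻ x, ‖(D n).low K x‖ₑ ^ (2:ℝ) ∂ν) atTop
        (𝓝 (∫⁻ x, (fun _ => 0) x ∂ν)) := by
      refine tendsto_lintegral_of_dominated_convergence
        (fun _ => ((volume (auxB N K)) ^ (1 / 2 : ℝ) * ENNReal.ofReal R) ^ (2:ℝ)) ?_ ?_ ?_ ?_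
      · intro n
        exact ((D n).low_cont K).enorm.measurable.pow_const _
      · intro n
        refine .of_forall fun x => ?_
        exact ENNReal.rpow_le_rpow (((D n).low_sup K x).trans
          (mul_le_mul_right ((D n).eu_le (hU n)) _)) (by norm_num)
      · rw [lintegral_const]
        refine ENNReal.mul_ne_top (ENNReal.rpow_ne_top_of_nonneg (by norm_num)
          (ENNReal.mul_ne_top (ENNReal.rpow_ne_top_of_nonneg (by norm_num) (auxB_fin K))
            ENNReal.ofReal_ne_top)) (measure_ne_top _ _)
      · refine .of_forall fun x => ?_
        have h2 : Tendsto (fun n => ‖(D n).low K x‖ₑ) atTop (𝓝 0) := by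
          have := (hlow K x).enorm
          simpa using this
        have h3 := (ENNReal.continuous_rpow_const (y := 2)).tendsto 0 |>.comp h2
        rw [ENNReal.zero_rpow_of_pos (by norm_num)] at h3
        exact h3
    have h4 := (ENNReal.continuous_rpow_const (y := (1/2))).tendsto _ |>.comp h1
    simp only [lintegral_const, zero_mul] at h4
    rw [ENNReal.zero_rpow_of_pos (by norm_num)] at h4
    refine h4.congr fun n => ?_
    rw [eLpNorm_eq_lintegral_rpow_enorm_toReal (by norm_num) (by norm_num)]
    simp
  have hconv : Tendsto (fun n => eLpNorm ((D n).u - fun _ => 0) 2 ν) atTop (𝓝 0) := by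
    rw [ENNReal.tendsto_nhds_zero]
    intro ε hε
    have ht : Tendsto (fun K : ℕ => ENNReal.ofReal (((1:ℝ)/4) ^ K) * ENNReal.ofReal R)
        atTop (𝓝 0) := by
      have h0 : Tendsto (fun n : ℕ => ENNReal.ofReal (((1:ℝ)/4) ^ n)) atTop (𝓝 0) := by
        rw [← ENNReal.ofReal_zero]
        exact ENNReal.tendsto_ofReal
          (tendsto_pow_atTop_nhds_zero_of_lt_one (by norm_num) (by norm_num))
      have := ENNReal.Tendsto.mul_const (b := ENNReal.ofReal R) h0 (Or.inr ENNReal.ofReal_ne_top)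
      simpa using this
    obtain ⟨K, hK⟩ := ((ENNReal.tendsto_nhds_zero.1 ht) (ε / 2) (ENNReal.half_pos hε.ne')).exists
    filter_upwards [(ENNReal.tendsto_nhds_zero.1 (hlow2 K)) (ε / 2) (ENNReal.half_pos hε.ne')]
      with n hn
    have e : ((D n).u - fun _ => 0) = (D n).low K + (fun x => (D n).u x - (D n).low K x) := by
      funext x; simp
    rw [e]
    refine (eLpNorm_add_le ((D n).low_cont K).aestronglyMeasurable
        (((D n).u_mem.aestronglyMeasurable.mono_measure hle).sub
          ((D n).low_cont _).aestronglyMeasurable) (by norm_num)).trans ?_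
    rw [← ENNReal.add_halves ε]
    refine add_le_add hn ?_
    refine (eLpNorm_mono_measure _ hle).trans (((D n).tail2 K).trans ?_)
    exact (mul_le_mul_right ((D n).ew_le (hW n)) _).trans hK
  obtain ⟨φ, hφ, h⟩ := (tendstoInMeasure_of_tendsto_eLpNorm (by norm_num)
    (fun n => (D n).u_mem.aestronglyMeasurable.mono_measure hle)
    aestronglyMeasurable_const hconv).exists_seq_tendsto_ae
  exact ⟨φ, hφ, hac.ae_le h⟩

end nv

section bl
variable {N : ℕ}

lemma aux_bl_real {p : ℝ} (hp : 0 < p) {ε : ℝ} (hε : 0 < ε) :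
    ∃ C : ℝ, 0 ≤ C ∧ ∀ s t : ℝ, 0 ≤ s → 0 ≤ t → (s + t) ^ p ≤ (1 + ε) * s ^ p + C * t ^ p := by
  have hcont : Tendsto (fun η : ℝ => (1 + η) ^ p) (𝓝[>] 0) (𝓝 1) := by
    have h1 : Tendsto (fun η : ℝ => (1 + η) ^ p) (𝓝 0) (𝓝 ((1 + 0) ^ p)) :=
      (tendsto_const_nhds.add tendsto_id).rpow_const (Or.inr hp.le)
    rw [add_zero, Real.one_rpow] at h1
    exact h1.mono_left nhdsWithin_le_nhds
  have h1e : (1:ℝ) < 1 + ε := by linarith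
  obtain ⟨η, h1, h2⟩ := ((hcont.eventually (gt_mem_nhds h1e)).and
    self_mem_nhdsWithin).exists
  have hη : 0 < η := h2
  refine ⟨(1 + η⁻¹) ^ p, by positivity, fun s t hs ht => ?_⟩
  have a1 : 0 ≤ s ^ p := by positivity
  have a2 : 0 ≤ t ^ p := by positivity
  have a3 : 0 ≤ (1 + η⁻¹) ^ p * t ^ p := by positivity
  rcases le_total t (η * s) with h | h
  · calc (s + t) ^ p ≤ ((1 + η) * s) ^ p := Real.rpow_le_rpow (by positivity) (by linarith) hp.le
      _ = (1 + η) ^ p * s ^ p := Real.mul_rpow (by positivity) hs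
      _ ≤ (1 + ε) * s ^ p := by gcongr
      _ ≤ _ := by linarith
  · have h3 : s ≤ η⁻¹ * t := by rwa [le_inv_mul_iff₀ hη]
    calc (s + t) ^ p ≤ ((1 + η⁻¹) * t) ^ p := Real.rpow_le_rpow (by positivity) (by linarith) hp.le
      _ = (1 + η⁻¹) ^ p * t ^ p := Real.mul_rpow (by positivity) ht
      _ ≤ _ := by
        have : 0 ≤ (1 + ε) * s ^ p := by positivity
        linarith

lemma aux_bl_pt {p : ℝ} (hp : 0 < p) {ε : ℝ} (hε : 0 < ε) :
    ∃ C : ℝ, 0 ≤ C ∧ ∀ a b : ℂ, |‖a + b‖ ^ p - ‖a‖ ^ p| ≤ ε * ‖a‖ ^ p + C * ‖b‖ ^ p := by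
  set e := min (ε / 2) 1 with he
  have he0 : 0 < e := lt_min (by linarith) one_pos
  have he1 : e ≤ 1 := min_le_right _ _
  have he2 : e ≤ ε / 2 := min_le_left _ _
  obtain ⟨C, hC, h⟩ := aux_bl_real hp he0
  refine ⟨2 * C, by positivity, fun a b => ?_⟩
  have a1 : 0 ≤ ‖a‖ ^ p := by positivity
  have a2 : 0 ≤ ‖b‖ ^ p := by positivity
  have a3 : 0 ≤ C * ‖b‖ ^ p := by positivity
  have h1 : ‖a + b‖ ^ p ≤ (1 + e) * ‖a‖ ^ p + C * ‖b‖ ^ p :=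
    (Real.rpow_le_rpow (norm_nonneg _) (norm_add_le a b) hp.le).trans
      (h _ _ (norm_nonneg _) (norm_nonneg _))
  have h2 : ‖a‖ ^ p ≤ (1 + e) * ‖a + b‖ ^ p + C * ‖b‖ ^ p := by
    refine (Real.rpow_le_rpow (norm_nonneg _) ?_ hp.le).trans
      (h _ _ (norm_nonneg _) (norm_nonneg _))
    have := norm_sub_le (a + b) b
    simpa using this
  have h3 : e * ‖a + b‖ ^ p ≤ e * ((1 + e) * ‖a‖ ^ p + C * ‖b‖ ^ p) :=
    mul_le_mul_of_nonneg_left h1 he0.le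
  have h4 : e * (C * ‖b‖ ^ p) ≤ C * ‖b‖ ^ p := mul_le_of_le_one_left a3 he1
  have h5 : e * ((1 + e) * ‖a‖ ^ p) ≤ ε * ‖a‖ ^ p := by
    rw [← mul_assoc]
    refine mul_le_mul_of_nonneg_right ?_ a1
    nlinarith
  have h6 : e * ‖a‖ ^ p ≤ ε * ‖a‖ ^ p := mul_le_mul_of_nonneg_right (by linarith) a1
  rw [abs_le]
  constructor
  · nlinarith
  · nlinarith

lemma aux_BL {p : ℝ} (hp : 0 < p) (D : ℕ → Esp N → ℂ) (g : Esp N → ℂ)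
    (hD : ∀ n, MemLp (D n) (ENNReal.ofReal p) volume) (hg : MemLp g (ENNReal.ofReal p) volume)
    (M : ℝ) (hM : ∀ n, ∫ x, ‖D n x‖ ^ p ≤ M)
    (hae : ∀ᵐ x, Tendsto (fun n => D n x) atTop (𝓝 0)) :
    Tendsto (fun n => (∫ x, ‖D n x + g x‖ ^ p) - ∫ x, ‖D n x‖ ^ p) atTop
      (𝓝 (∫ x, ‖g x‖ ^ p)) := by
  have hintg : ∀ {f : Esp N → ℂ}, MemLp f (ENNReal.ofReal p) volume →
      Integrable (fun x => ‖f x‖ ^ p) volume := by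
    intro f hf
    have := hf.integrable_norm_rpow (by simpa using hp) (by simp)
    rwa [ENNReal.toReal_ofReal hp.le] at this
  have iD := fun n => hintg (hD n)
  have ig := hintg hg
  have is : ∀ n, Integrable (fun x => ‖D n x + g x‖ ^ p) volume := fun n => hintg ((hD n).add hg)
  set W : ℕ → Esp N → ℝ := fun n x => ‖D n x + g x‖ ^ p - ‖D n x‖ ^ p - ‖g x‖ ^ p with hWd
  have iW : ∀ n, Integrable (W n) volume := fun n => ((is n).sub (iD n)).sub ig
  have hM0 : 0 ≤ M := (integral_nonneg fun x => by positivity).trans (hM 0)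
  have key : Tendsto (fun n => ∫ x, W n x) atTop (𝓝 0) := by
    rw [Metric.tendsto_atTop']
    intro r hr
    set ε := r / (2 * (M + 1)) with hεd
    have hε : 0 < ε := by positivity
    have hεM : ε * M ≤ r / 2 := by
      rw [hεd, div_mul_eq_mul_div, div_le_div_iff₀ (by positivity) (by norm_num)]
      nlinarith
    obtain ⟨C, hC, hb⟩ := aux_bl_pt hp hε
    set Z : ℕ → Esp N → ℝ := fun n x => max (|W n x| - ε * ‖D n x‖ ^ p) 0 with hZ
    have hZb : ∀ n x, ‖Z n x‖ ≤ (C + 1) * ‖g x‖ ^ p := by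
      intro n x
      have a1 : 0 ≤ ‖g x‖ ^ p := by positivity
      rw [Real.norm_of_nonneg (le_max_right _ _)]
      refine max_le ?_ (by positivity)
      have h1 := hb (D n x) (g x)
      have h2 : |W n x| ≤ |‖D n x + g x‖ ^ p - ‖D n x‖ ^ p| + ‖g x‖ ^ p := by
        have := abs_sub (‖D n x + g x‖ ^ p - ‖D n x‖ ^ p) (‖g x‖ ^ p)
        rwa [abs_of_nonneg a1] at this
      linarith
    have iZ : ∀ n, Integrable (Z n) volume := fun n =>
      ((iW n).abs.sub ((iD n).const_mul ε)).pos_part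
    have hZ0 : Tendsto (fun n => ∫ x, Z n x) atTop (𝓝 (∫ x, (0:ℝ) ∂(volume : Measure (Esp N)))) := by
      refine tendsto_integral_of_dominated_convergence (fun x => (C + 1) * ‖g x‖ ^ p)
        (fun n => (iZ n).aestronglyMeasurable) (ig.const_mul _)
        (fun n => .of_forall (hZb n)) ?_
      filter_upwards [hae] with x hx
      have c1 : Tendsto (fun n => ‖D n x‖ ^ p) atTop (𝓝 0) := by
        have := hx.norm.rpow_const (p := p) (Or.inr hp.le)
        rwa [norm_zero, Real.zero_rpow hp.ne'] at this
      have c2 : Tendsto (fun n => ‖D n x + g x‖ ^ p) atTop (𝓝 (‖g x‖ ^ p)) := by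
        have := (hx.add_const (g x)).norm.rpow_const (p := p) (Or.inr hp.le)
        rwa [zero_add] at this
      have c3 : Tendsto (fun n => W n x) atTop (𝓝 (‖g x‖ ^ p - 0 - ‖g x‖ ^ p)) :=
        (c2.sub c1).sub_const _
      have c4 := (c3.abs.sub (c1.const_mul ε)).max (tendsto_const_nhds (x := (0:ℝ)))
      simpa using c4
    rw [integral_zero] at hZ0
    rw [Metric.tendsto_atTop'] at hZ0
    obtain ⟨n0, hn0⟩ := hZ0 (r / 2) (by positivity)
    refine ⟨n0, fun n hn => ?_⟩
    have h1 := hn0 n hn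
    rw [Real.dist_eq, sub_zero] at h1 ⊢
    have h2 : |∫ x, W n x| ≤ (∫ x, Z n x) + ε * ∫ x, ‖D n x‖ ^ p := by
      rw [← integral_const_mul, ← integral_add (iZ n) ((iD n).const_mul ε)]
      refine (abs_integral_le_integral_abs).trans (integral_mono (iW n).abs
        ((iZ n).add ((iD n).const_mul ε)) fun x => ?_)
      have := le_max_left (|W n x| - ε * ‖D n x‖ ^ p) 0
      change |W n x| ≤ Z n x + ε * ‖D n x‖ ^ p
      simp only [hZ]
      linarith
    have h3 : ε * ∫ x, ‖D n x‖ ^ p ≤ ε * M := mul_le_mul_of_nonneg_left (hM n) hε.le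
    have h4 := le_abs_self (∫ x, Z n x)
    linarith
  have h5 := key.add_const (∫ x, ‖g x‖ ^ p)
  rw [zero_add] at h5
  refine h5.congr fun n => ?_
  simp only [hWd]
  have e1 := integral_sub ((is n).sub (iD n)) ig
  simp only [Pi.sub_apply] at e1
  rw [e1, integral_sub (is n) (iD n)]
  ring

end bl

section fin
variable {N : ℕ}

lemma aux_sq_lim {f τ : ℕ → ℝ} (hf : ∀ n, 0 ≤ f n) (C : ℝ) (h : ∀ n, f n ^ 2 ≤ C * τ n)
    (hτ : Tendsto τ atTop (𝓝 0)) : Tendsto (fun n => ENNReal.ofReal (f n)) atTop (𝓝 0) := by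
  have h1 : Tendsto (fun n => f n ^ 2) atTop (𝓝 0) := by
    have := hτ.const_mul C
    rw [mul_zero] at this
    exact squeeze_zero (fun n => sq_nonneg _) h this
  have h2 := (Real.continuous_sqrt.tendsto 0).comp h1
  rw [Real.sqrt_zero] at h2
  have h3 := ENNReal.tendsto_ofReal h2
  rw [ENNReal.ofReal_zero] at h3
  refine h3.congr fun n => ?_
  simp [Real.sqrt_sq (hf n)]

lemma aux_le_sqrt {f C B T : ℝ} (hC : 0 ≤ C) (h : f ^ 2 ≤ C * T) (hT : T ≤ B) :
    f ≤ Real.sqrt (C * B) :=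
  Real.le_sqrt_of_sq_le (h.trans (mul_le_mul_of_nonneg_left hT hC))

lemma aux_core {σ c : ℝ} (hs : 0 < σ) (hsub : (N : ℝ) * (1 / 2 - 1 / (2 * σ + 2)) < 2)
    (hc : 0 < c) (u : ℕ → H2 N)
    (h1 : Tendsto (fun n => (u n).pPow σ) atTop (𝓝 1))
    (h2 : Tendsto (fun n => Tfun c (u n)) atTop (𝓝 (tmin N σ c))) :
    ∃ (ψ : ℕ → ℕ) (xs : ℕ → Esp N) (U : H2 N), StrictMono ψ ∧
        U.pPow σ = 1 ∧ Tfun c U = tmin N σ c ∧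
        H2TendstoTrans (fun k => u (ψ k)) xs U := by
  classical
  set t := tmin N σ c with htd
  have ht : 0 < t := aux_tmin_pos hs hsub hc
  obtain ⟨B, hB⟩ := h2.bddAbove_range
  have hB' : ∀ n, Tfun c (u n) ≤ B := fun n => hB ⟨n, rfl⟩
  have hci : 0 < c⁻¹ := inv_pos.2 hc
  set R := Real.sqrt ((2 + 3 * c⁻¹) * B) with hR
  have hbd : ∀ W : H2 N, Tfun c W ≤ B → ‖W.U2‖ ≤ R ∧ ‖W.W2‖ ≤ R ∧ ∀ i, ‖W.G2 i‖ ≤ R := by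
    intro W hW
    have hT := W.Tfun_nonneg hc
    refine ⟨aux_le_sqrt (by positivity) ?_ hW, aux_le_sqrt (by positivity) ?_ hW,
      fun i => aux_le_sqrt (by positivity) (W.grad_le hc i) hW⟩
    · nlinarith [W.mass_le hc]
    · nlinarith [W.lap_le hc]
  obtain ⟨K, δ, hδ, hnv⟩ := aux_nonvanish hs hsub u R (fun n => (hbd _ (hB' n)).1)
    (fun n => (hbd _ (hB' n)).2.1) h1
  set y : ℕ → Esp N := fun n => if h : ∃ x, δ ≤ ‖(u n).low K x‖ then h.choose else 0 with hy
  have hy2 : ∀ᶠ n in atTop, δ ≤ ‖(u n).low K (y n)‖ := by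
    filter_upwards [hnv] with n hn
    simp only [hy, dif_pos hn]
    exact hn.choose_spec
  set v : ℕ → H2 N := fun n => (u n).tr (y n) with hv
  have hvT : ∀ n, Tfun c (v n) = Tfun c (u n) := fun n => (u n).tr_Tfun _ _
  have hvP : ∀ n, (v n).pPow σ = (u n).pPow σ := fun n => (u n).tr_pPow _ _
  have hvb : ∀ n, Tfun c (v n) ≤ B := fun n => (hvT n).trans_le (hB' n)
  obtain ⟨φ₁, hφ₁, V, hwU, hwW⟩ := H2.weak v R (fun n => (hbd _ (hvb n)).1)
    (fun n => (hbd _ (hvb n)).2.1) (fun n => (hbd _ (hvb n)).2.2)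
  -- the weak limit is nonzero
  have hV0 : δ ≤ ‖V.low K 0‖ := by
    have a1 : Tendsto (fun n => (v (φ₁ n)).low K 0) atTop (𝓝 (V.low K 0)) := by
      rw [V.low_inner]
      refine (hwU (auxk K 0)).congr fun n => ?_
      rw [H2.low_inner]
    refine ge_of_tendsto a1.norm ?_
    filter_upwards [hφ₁.tendsto_atTop.eventually hy2] with n hn
    simp only [hv]
    rw [H2.tr_low, zero_add]
    exact hn
  have ha0 : 0 < V.pPow σ := by
    refine lt_of_le_of_ne (V.pPow_nonneg σ) fun h0 => ?_
    have b1 := V.pPow_eq hs hsub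
    rw [← h0, Real.zero_rpow (by simp; linarith), ENNReal.ofReal_zero,
      eLpNorm_eq_zero_iff V.u_mem.aestronglyMeasurable (by simp; linarith)] at b1
    have b2 : V.U2 = 0 := by
      rw [Lp.eq_zero_iff_ae_eq_zero]
      exact (MemLp.coeFn_toLp _).trans b1
    rw [V.low_inner, b2, inner_zero_right, norm_zero] at hV0
    linarith
  -- almost everywhere convergence
  set R' := R + ‖V.U2‖ + ‖V.W2‖ with hR'
  obtain ⟨φ₂, hφ₂, hae⟩ := aux_ae_conv (fun n => (v (φ₁ n)).sub V) R'
    (fun n => by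
      rw [H2.sub_U2]
      have := norm_sub_le (v (φ₁ n)).U2 V.U2
      have := (hbd _ (hvb (φ₁ n))).1
      have := norm_nonneg V.W2
      linarith)
    (fun n => by
      rw [H2.sub_W2]
      have := norm_sub_le (v (φ₁ n)).W2 V.W2
      have := (hbd _ (hvb (φ₁ n))).2.1
      have := norm_nonneg V.U2
      linarith)
    (fun h => by
      have := (hwU h).sub_const (inner ℂ h V.U2)
      rw [sub_self] at this
      rw [inner_zero_right]
      refine this.congr fun n => ?_
      simp only [H2.sub_U2, inner_sub_right])
  have hφ : StrictMono (fun n => φ₁ (φ₂ n)) := hφ₁.comp hφ₂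
  set E : ℕ → H2 N := fun n => (v (φ₁ (φ₂ n))).sub V with hE
  have hTw : Tendsto (fun n => Tfun c (v (φ₁ (φ₂ n)))) atTop (𝓝 t) := by
    simp only [hvT]; exact h2.comp hφ.tendsto_atTop
  have hPw : Tendsto (fun n => (v (φ₁ (φ₂ n))).pPow σ) atTop (𝓝 1) := by
    simp only [hvP]; exact h1.comp hφ.tendsto_atTop
  have hTE : Tendsto (fun n => Tfun c (E n)) atTop (𝓝 (t - Tfun c V)) := by
    have := hTw.sub (H2.Texp (hwU.comp hφ₂) (hwW.comp hφ₂) c)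
    refine this.congr fun n => ?_
    simp only [hE]; ring
  obtain ⟨B₂, hB₂⟩ := hTE.bddAbove_range
  have hB₂' : ∀ n, Tfun c (E n) ≤ B₂ := fun n => hB₂ ⟨n, rfl⟩
  obtain ⟨C, hC, hCp⟩ := H2.pPow_le (N := N) hs hsub hc
  have hp : 2 < 2 * σ + 2 := by linarith
  have hp0 : 0 < 2 * σ + 2 := by linarith
  have hPE : Tendsto (fun n => (E n).pPow σ) atTop (𝓝 (1 - V.pPow σ)) := by
    have hBL := aux_BL (p := 2 * σ + 2) hp0 (fun n => (E n).u) V.u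
      (fun n => (E n).memLp hp hsub) (V.memLp hp hsub)
      ((Real.sqrt (C * B₂)) ^ (2 * σ + 2)) (fun n => by
        have d1 := aux_le_sqrt hC.le (hCp (E n)) (hB₂' n)
        have d2 := Real.rpow_le_rpow (Real.rpow_nonneg ((E n).pPow_nonneg σ) _) d1 hp0.le
        rw [← Real.rpow_mul ((E n).pPow_nonneg σ), inv_mul_cancel₀ hp0.ne', Real.rpow_one] at d2
        exact d2) hae
    refine (hPw.sub hBL).congr fun n => ?_
    have e1 : ∫ x, ‖(E n).u x + V.u x‖ ^ (2 * σ + 2) = (v (φ₁ (φ₂ n))).pPow σ := by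
      unfold H2.pPow
      simp [hE, H2.sub]
    rw [e1]
    unfold H2.pPow
    ring
  set a := V.pPow σ with had
  have ha1 : a ≤ 1 := by
    have := ge_of_tendsto' hPE fun n => (E n).pPow_nonneg σ
    linarith
  set θ := 2 / (2 * σ + 2) with hθ
  have hθ0 : 0 < θ := by positivity
  have hθ1 : θ < 1 := by rw [hθ, div_lt_one hp0]; exact hp
  have i1 : t * a ^ θ ≤ Tfun c V := V.tmin_le hs hsub hc
  have i2 : t * (1 - a) ^ θ ≤ t - Tfun c V := by
    refine le_of_tendsto_of_tendsto' ((hPE.rpow_const (p := θ) (Or.inr hθ0.le)).const_mul t) hTE ?_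
    intro n
    exact (E n).tmin_le hs hsub hc
  have ha : a = 1 := by
    by_contra hne
    have hlt : a < 1 := lt_of_le_of_ne ha1 hne
    have j1 : a < a ^ θ := by
      have := Real.rpow_lt_rpow_of_exponent_gt ha0 hlt hθ1
      rwa [Real.rpow_one] at this
    have j2 : 1 - a < (1 - a) ^ θ := by
      have := Real.rpow_lt_rpow_of_exponent_gt (sub_pos.2 hlt) (by linarith : 1 - a < 1) hθ1
      rwa [Real.rpow_one] at this
    nlinarith
  have hTV : Tfun c V = t := by
    have k1 : 0 ≤ t - Tfun c V := ge_of_tendsto' hTE fun n => (E n).Tfun_nonneg hc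
    rw [ha, Real.one_rpow, mul_one] at i1
    linarith
  rw [hTV, sub_self] at hTE
  refine ⟨_, fun n => y (φ₁ (φ₂ n)), V, hφ, ha, hTV, ?_, ?_, ?_⟩
  · refine (aux_sq_lim (fun n => norm_nonneg _) _ (fun n => (E n).mass_le hc) hTE).congr fun n => ?_
    rw [← (E n).norm_U2, ENNReal.ofReal_toReal (E n).u_mem.eLpNorm_ne_top]
    rfl
  · intro i
    refine (aux_sq_lim (fun n => norm_nonneg _) _ (fun n => (E n).grad_le hc i) hTE).congr fun n => ?_
    rw [← (E n).norm_G2, ENNReal.ofReal_toReal ((E n).grad_mem i).eLpNorm_ne_top]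
    rfl
  · refine (aux_sq_lim (fun n => norm_nonneg _) _ (fun n => (E n).lap_le hc) hTE).congr fun n => ?_
    rw [← (E n).norm_W2, ENNReal.ofReal_toReal (E n).lapl_mem.eLpNorm_ne_top]
    rfl

lemma aux_sub {σ : ℝ}
    (hσ : ((N ≤ 4 ∧ 0 < σ) ∨ (5 ≤ N ∧ 0 < σ ∧ σ < 4 / ((N : ℝ) - 4)))) :
    0 < σ ∧ (N : ℝ) * (1 / 2 - 1 / (2 * σ + 2)) < 2 := by
  have hs : 0 < σ := by rcases hσ with h | h; exacts [h.2, h.2.1]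
  refine ⟨hs, ?_⟩
  have e : (N : ℝ) * (1 / 2 - 1 / (2 * σ + 2)) = N * σ / (2 * σ + 2) := by
    have : 2 * σ + 2 ≠ 0 := by linarith
    have : σ + 1 ≠ 0 := by linarith
    field_simp
    ring
  rw [e, div_lt_iff₀ (by linarith)]
  rcases hσ with ⟨h, _⟩ | ⟨h, _, h3⟩
  · have : (N : ℝ) ≤ 4 := by exact_mod_cast h
    nlinarith
  · have : (5 : ℝ) ≤ N := by exact_mod_cast h
    rw [lt_div_iff₀ (by linarith)] at h3
    nlinarith

end fin

end helpers

/-- For energy-subcritical `σ` and any `c > 0`, `t(c) > 0`, the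
minimization problem `(T_c)` has a solution, and every minimizing sequence is precompact
in `H²` modulo translations. -/
theorem stmt11 (N : ℕ) (σ : ℝ) (hN : 1 ≤ N)
    (hσ : ((N ≤ 4 ∧ 0 < σ) ∨ (5 ≤ N ∧ 0 < σ ∧ σ < 4 / ((N : ℝ) - 4))))
    (c : ℝ) (hc : 0 < c) :
    0 < tmin N σ c ∧
    (∃ U : H2 N, U.pPow σ = 1 ∧ Tfun c U = tmin N σ c) ∧
    (∀ u : ℕ → H2 N,
      Tendsto (fun n => (u n).pPow σ) atTop (nhds 1) →
      Tendsto (fun n => Tfun c (u n)) atTop (nhds (tmin N σ c)) →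
      ∃ (ψ : ℕ → ℕ) (xs : ℕ → Esp N) (U : H2 N), StrictMono ψ ∧
        U.pPow σ = 1 ∧ Tfun c U = tmin N σ c ∧
        H2TendstoTrans (fun k => u (ψ k)) xs U) := by
  obtain ⟨hs, hsub⟩ := aux_sub hσ
  refine ⟨aux_tmin_pos hs hsub hc, ?_, fun u h1 h2 => aux_core hs hsub hc u h1 h2⟩
  obtain ⟨r, _, hr, hmem⟩ := exists_seq_tendsto_sInf (aux_nonempty (N := N) (c := c) hs hsub)
    (aux_bddBelow hc)
  choose u hu1 hu2 using hmem
  obtain ⟨_, _, U, _, hU1, hU2, _⟩ := aux_core hs hsub hc u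
    (tendsto_const_nhds.congr fun n => (hu1 n).symm) (hr.congr hu2)
  exact ⟨U, hU1, hU2⟩

end
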